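/- For each ε > 0 there exists a constant c(ε) such that the following holds. Let P be a set of m distinct points and L a set of n distinct lines in ℝ³, and assume that every algebraic surface in ℝ³ of degree at most c(ε) contains at most q₂ lines of L. Then I(P,L) ≤ α·(m^{1/2+ε}·n^{3/4} + m^{2/3+ε}·n^{1/2}·q₂^{1/6} + m + n), where α is a constant depending only on ε. -/

import Mathlib

attribute [local instance] Classical.propDecidable

noncomputable section

/-- The number of incidences between a finite set of points and a finite set of
curves (subsets of `ℝ^d`): the number of pairs `(p, γ)` with `p ∈ γ`. -/
def Incidences {d : ℕ} (P : Finset (Fin d → ℝ)) (C : Finset (Set (Fin d → ℝ))) : ℕ :=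
  ((P ×ˢ C).filter fun pc => pc.1 ∈ pc.2).card

/-- A line in `ℝ^d`. -/
def IsLine {d : ℕ} (ℓ : Set (Fin d → ℝ)) : Prop :=
  ∃ a b : Fin d → ℝ, b ≠ 0 ∧ ℓ = {x | ∃ t : ℝ, x = a + t • b}

/-- The real zero set of a polynomial in `d` variables. -/
def zeroSet {d : ℕ} (f : MvPolynomial (Fin d) ℝ) : Set (Fin d → ℝ) :=
  {x | MvPolynomial.eval x f = 0}

/-- A real algebraic set in `ℝ^d`. -/
def IsAlgSet {d : ℕ} (V : Set (Fin d → ℝ)) : Prop :=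
  ∃ S : Set (MvPolynomial (Fin d) ℝ),
    V = {x | ∀ f ∈ S, MvPolynomial.eval x f = 0}

/-- A real algebraic set in `ℝ^d` cut out by polynomials of degree at most `E`. -/
def IsAlgSetDeg {d : ℕ} (E : ℕ) (V : Set (Fin d → ℝ)) : Prop :=
  ∃ S : Set (MvPolynomial (Fin d) ℝ), (∀ f ∈ S, f.totalDegree ≤ E) ∧
    V = {x | ∀ f ∈ S, MvPolynomial.eval x f = 0}

/-- An irreducible real algebraic set: a nonempty algebraic set that is not the
union of two proper algebraic subsets. -/
def IsIrredAlgSet {d : ℕ} (V : Set (Fin d → ℝ)) : Prop :=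
  IsAlgSet V ∧ V.Nonempty ∧
    ∀ V₁ V₂ : Set (Fin d → ℝ), IsAlgSet V₁ → IsAlgSet V₂ → V = V₁ ∪ V₂ →
      V = V₁ ∨ V = V₂

/-- The real algebraic set `V` has dimension at least `j`: there is a strictly
increasing chain of `j+1` irreducible algebraic sets contained in `V`. -/
def AlgDimGE {d : ℕ} (j : ℕ) (V : Set (Fin d → ℝ)) : Prop :=
  ∃ W : Fin (j + 1) → Set (Fin d → ℝ),
    (∀ i, IsIrredAlgSet (W i)) ∧
    (∀ i i' : Fin (j + 1), i < i' → W i ⊂ W i') ∧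
    W (Fin.last j) ⊆ V

/-- The real algebraic set `V` has dimension exactly `j`. -/
def HasAlgDim {d : ℕ} (j : ℕ) (V : Set (Fin d → ℝ)) : Prop :=
  AlgDimGE j V ∧ ¬ AlgDimGE (j + 1) V

/-- An irreducible algebraic curve of degree at most `E` in `ℝ^d`: an irreducible
real algebraic set of dimension one, cut out by polynomials of degree at most `E`. -/
def IsIrredCurve {d : ℕ} (E : ℕ) (γ : Set (Fin d → ℝ)) : Prop :=
  IsAlgSetDeg E γ ∧ IsIrredAlgSet γ ∧ HasAlgDim 1 γ

/-- A finite family `C` of curves has `k` degrees of freedom with multiplicity `s`: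
(i) for every `k` distinct points, at most `s` curves of `C` pass through all of
them, and (ii) any two distinct curves of `C` intersect in at most `s` points. -/
def HasDegreesOfFreedom {d : ℕ} (C : Finset (Set (Fin d → ℝ))) (k s : ℕ) : Prop :=
  (∀ pts : Finset (Fin d → ℝ), pts.card = k →
      (C.filter fun γ => ∀ p ∈ pts, p ∈ γ).card ≤ s) ∧
  ∀ γ₁ ∈ C, ∀ γ₂ ∈ C, γ₁ ≠ γ₂ → (γ₁ ∩ γ₂).Finite ∧ (γ₁ ∩ γ₂).ncard ≤ s

/-!
By the polynomial ham sandwich theorem there is a polynomial of bounded degree whose zero set `Z`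
cuts `ℝ^d` into cells, each containing a small fraction of the points, and a line outside `Z` meets
few of them. Induction on the number of points bounds the incidences inside the cells: since the
degree is a large constant depending on `ε`, Hölder's inequality shows that the loss `m ^ ε`
outweighs all constant factors. The points on `Z` and the lines inside `Z` are projected generically
to a plane, where the Szemerédi–Trotter theorem with an `ε`-loss applies; there at most `q` lines
are left, by assumption. The planar bound itself is obtained by the same induction, because a curve
of bounded degree contains boundedly many lines.

The discrete ham sandwich theorem needs no topological fixed point theorem here: a random hyperplane
spanned by one vector from each family splits the families in a fixed proportion on average, which
is enough for partitioning.
-/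

section Splitting

open Finset Function

variable {ι X : Type*}

/-- The ordered pairs from `S` on which `g` takes values of the same strict sign. Their number
measures how badly the zero set of `g` splits `S`. -/
def sameSidePairs (S : Finset X) (g : X → ℝ) : Finset (X × X) :=
  (S ×ˢ S).filter fun z => 0 < g z.1 * g z.2

lemma card_sameSidePairs (S : Finset X) (g : X → ℝ) :
    #(sameSidePairs S g) = ∑ x ∈ S, ∑ y ∈ S, if 0 < g x * g y then 1 else 0 := by
  rw [sameSidePairs, card_filter, sum_product]

lemma sameSidePairs_const_smul (S : Finset X) (g : X → ℝ) {c : ℝ} (hc : c ≠ 0) :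
    sameSidePairs S (c • g) = sameSidePairs S g := by
  refine filter_congr fun z _ => ?_
  rw [Pi.smul_apply, Pi.smul_apply, smul_mul_smul_comm, smul_eq_mul,
    mul_pos_iff_of_pos_left (mul_self_pos.2 hc)]

lemma lowerSemicontinuous_card_sameSidePairs {Y : Type*} [TopologicalSpace Y] (S : Finset X)
    {g : Y → X → ℝ} (hg : ∀ x, Continuous fun y => g y x) :
    LowerSemicontinuous fun y => #(sameSidePairs S (g y)) := by
  simp only [card_sameSidePairs]
  refine lowerSemicontinuous_sum fun x _ => lowerSemicontinuous_sum fun x' _ => ?_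
  exact (isOpen_lt continuous_const ((hg x).mul (hg x'))).lowerSemicontinuous_indicator
    (y := 1) zero_le_one

lemma not_pairwise_sameSide_of_antisymm {F : X → X → ℝ} (hF : ∀ x y, F x y = -F y x) (x y z : X) :
    ¬(0 < F x y * F x z ∧ 0 < F y z * F y x ∧ 0 < F z x * F z y) := by
  rintro ⟨hx, hy, hz⟩
  have hprod : F x y * F x z * (F y z * F y x) * (F z x * F z y)
      = -(F x y * F y z * F z x) ^ 2 := by
    rw [hF x z, hF y x, hF z y]
    ring
  linarith [mul_pos (mul_pos hx hy) hz, sq_nonneg (F x y * F y z * F z x)]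

lemma sum_card_sameSidePairs_le_of_antisymm {F : X → X → ℝ} (hF : ∀ x y, F x y = -F y x)
    (S : Finset X) : 3 * ∑ x ∈ S, #(sameSidePairs S (F x)) ≤ 2 * #S ^ 3 := by
  let A : X → X → X → ℕ := fun x y z => if 0 < F x y * F x z then 1 else 0
  have hle : ∀ x y z, A x y z + A y z x + A z x y ≤ 2 := fun x y z => by
    have := not_pairwise_sameSide_of_antisymm hF x y z
    simp only [A]
    split_ifs <;> first | omega | tauto
  have hsum : ∑ x ∈ S, #(sameSidePairs S (F x)) = ∑ x ∈ S, ∑ y ∈ S, ∑ z ∈ S, A x y z :=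
    sum_congr rfl fun x _ => card_sameSidePairs S (F x)
  have hrotate (B : X → X → X → ℕ) :
      ∑ x ∈ S, ∑ y ∈ S, ∑ z ∈ S, B y z x = ∑ x ∈ S, ∑ y ∈ S, ∑ z ∈ S, B x y z := by
    rw [sum_comm]
    exact sum_congr rfl fun y _ => sum_comm
  calc 3 * ∑ x ∈ S, #(sameSidePairs S (F x))
      = ∑ x ∈ S, ∑ y ∈ S, ∑ z ∈ S, (A x y z + A y z x + A z x y) := by
        simp only [sum_add_distrib]
        rw [hrotate fun x y z => A y z x, hrotate A, hsum]
        ring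
    _ ≤ ∑ x ∈ S, ∑ y ∈ S, ∑ z ∈ S, 2 := by gcongr; exact hle _ _ _
    _ = 2 * #S ^ 3 := by
        simp only [sum_const, smul_eq_mul]
        ring

variable [Fintype ι]

lemma sum_piFinset_sum_update (S : ι → Finset X) (i : ι) (G : (ι → X) → ℕ) :
    ∑ p ∈ Fintype.piFinset S, ∑ x ∈ S i, G (update p i x)
      = #(S i) * ∑ p ∈ Fintype.piFinset S, G p := by
  have hswap : ∀ q ∈ Fintype.piFinset S ×ˢ S i,
      (update q.1 i q.2, q.1 i) ∈ Fintype.piFinset S ×ˢ S i := fun q hq => by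
    rw [mem_product, Fintype.mem_piFinset] at hq ⊢
    refine ⟨fun j => ?_, hq.1 i⟩
    rcases eq_or_ne j i with rfl | hj
    · simpa using hq.2
    · simpa [hj] using hq.1 j
  calc ∑ p ∈ Fintype.piFinset S, ∑ x ∈ S i, G (update p i x)
      = ∑ q ∈ Fintype.piFinset S ×ˢ S i, G (update q.1 i q.2) := by rw [sum_product]
    _ = ∑ q ∈ Fintype.piFinset S ×ˢ S i, G q.1 :=
        sum_nbij' (fun q => (update q.1 i q.2, q.1 i)) (fun q => (update q.1 i q.2, q.1 i))
          hswap hswap (by simp) (by simp) (by simp)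
    _ = #(S i) * ∑ p ∈ Fintype.piFinset S, G p := by
        rw [sum_product, mul_sum]
        simp only [sum_const, smul_eq_mul]

/-- The linear form whose kernel is the hyperplane spanned by the vectors `r i`, namely
`u ↦ det (u, r)`; it vanishes identically when the `r i` are linearly dependent. -/
def spanForm (r : ι → Option ι → ℝ) : Module.Dual ℝ (Option ι → ℝ) :=
  Matrix.detRowAlternating.toMultilinearMap.toLinearMap (fun a => a.elim 0 r) none

lemma spanForm_apply (r : ι → Option ι → ℝ) (u : Option ι → ℝ) :
    spanForm r u = (Matrix.of fun a : Option ι => a.elim u r).det := by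
  have : update (fun a : Option ι => a.elim 0 r) none u = fun a => a.elim u r := by
    ext a b
    cases a <;> simp
  exact congrArg Matrix.det this

lemma spanForm_update_swap (r : ι → Option ι → ℝ) (i : ι) (u w : Option ι → ℝ) :
    spanForm (update r i u) w = -spanForm (update r i w) u := by
  have hswap : (fun a : Option ι => a.elim u (update r i w)) ∘ Equiv.swap none (some i)
      = fun a => a.elim w (update r i u) := by
    ext a b
    rcases a with _ | j
    · simp
    · rcases eq_or_ne j i with rfl | hj
      · simp
      · rw [comp_apply, Equiv.swap_apply_of_ne_of_ne (by simp) (by simpa using hj)]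
        simp [hj]
  rw [spanForm_apply, spanForm_apply, ← hswap]
  exact Matrix.detRowAlternating.map_swap (fun a : Option ι => a.elim u (update r i w))
    (Option.some_ne_none i).symm

/-- With the vectors from the other families fixed, the determinant is antisymmetric in `p i` and
`x`, so of three vectors in the `i`-th family some one spans a hyperplane that does not leave the
other two on the same side. -/
lemma sum_card_sameSidePairs_spanForm_le (v : ι → X → Option ι → ℝ) (S : ι → Finset X) (i : ι)
    (hS : (S i).Nonempty) :
    3 * ∑ p ∈ Fintype.piFinset S,
        #(sameSidePairs (S i) fun x => spanForm (fun j => v j (p j)) (v i x))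
      ≤ 2 * ∑ _p ∈ Fintype.piFinset S, #(S i) ^ 2 := by
  let G : (ι → X) → ℕ := fun p =>
    #(sameSidePairs (S i) fun x => spanForm (fun j => v j (p j)) (v i x))
  have hG (p : ι → X) : 3 * ∑ x ∈ S i, G (update p i x) ≤ 2 * #(S i) ^ 3 := by
    refine sum_card_sameSidePairs_le_of_antisymm
      (F := fun x y => spanForm (fun j => v j (update p i x j)) (v i y)) (fun x y => ?_) (S i)
    simp only [apply_update]
    exact spanForm_update_swap _ i _ _
  refine Nat.le_of_mul_le_mul_left ?_ hS.card_pos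
  calc #(S i) * (3 * ∑ p ∈ Fintype.piFinset S, G p)
      = ∑ p ∈ Fintype.piFinset S, 3 * ∑ x ∈ S i, G (update p i x) := by
        rw [← mul_sum, sum_piFinset_sum_update]
        ring
    _ ≤ ∑ _p ∈ Fintype.piFinset S, 2 * #(S i) ^ 3 := sum_le_sum fun p _ => hG p
    _ = #(S i) * (2 * ∑ _p ∈ Fintype.piFinset S, #(S i) ^ 2) := by
        simp only [sum_const, smul_eq_mul]
        ring

lemma exists_dual_card_sameSidePairs_le_of_spanForm_ne_zero (v : ι → X → Option ι → ℝ)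
    (S : ι → Finset X) (hS : ∀ i, (S i).Nonempty)
    (hv : ∀ p ∈ Fintype.piFinset S, spanForm (fun i => v i (p i)) ≠ 0) :
    ∃ φ : Module.Dual ℝ (Option ι → ℝ), φ ≠ 0 ∧
      3 * ∑ i, #(sameSidePairs (S i) fun x => φ (v i x)) ≤ 2 * ∑ i, #(S i) ^ 2 := by
  have hsum : ∑ p ∈ Fintype.piFinset S,
        3 * ∑ i, #(sameSidePairs (S i) fun x => spanForm (fun j => v j (p j)) (v i x))
      ≤ ∑ _p ∈ Fintype.piFinset S, 2 * ∑ i, #(S i) ^ 2 := by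
    rw [← mul_sum, ← mul_sum, sum_comm, sum_comm (s := Fintype.piFinset S), mul_sum, mul_sum]
    exact sum_le_sum fun i _ => sum_card_sameSidePairs_spanForm_le v S i (hS i)
  obtain ⟨p, hp, hle⟩ := exists_le_of_sum_le (Fintype.piFinset_nonempty.2 hS) hsum
  exact ⟨_, hv p hp, hle⟩

lemma finite_setOf_spanForm_add_smul_single_eq_zero (r : ι → Option ι → ℝ) :
    {η : ℝ | spanForm (fun i => r i + η • Pi.single (some i) 1) = 0}.Finite := by
  let M : Matrix (Option ι) (Option ι) ℝ := Matrix.of fun a => a.elim 0 fun i => -r i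
  refine (Polynomial.finite_setOfPred_isRoot M.charpoly_monic.ne_zero).subset fun η hη => ?_
  have hM : Matrix.scalar _ η - M = Matrix.of fun a : Option ι =>
      a.elim (Pi.single none η) fun i => r i + η • Pi.single (some i) 1 := by
    ext a b
    rcases a with _ | i <;> rcases b with _ | j <;>
      simp [M, Matrix.sub_apply, Matrix.diagonal_apply, Pi.single_apply, eq_comm, add_comm]
  rw [Set.mem_ofPred_eq, Polynomial.IsRoot, Matrix.eval_charpoly, hM, ← spanForm_apply,
    show spanForm _ = 0 from hη, LinearMap.zero_apply]

/-- **Discrete ham sandwich**: the coefficient vector `c` is a limit of exact solutions for generic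
perturbations of the vectors `v i x`. -/
lemma exists_card_sameSidePairs_dotProduct_le (v : ι → X → Option ι → ℝ) (S : ι → Finset X)
    (hS : ∀ i, (S i).Nonempty) :
    ∃ c : Option ι → ℝ, c ≠ 0 ∧
      3 * ∑ i, #(sameSidePairs (S i) fun x => c ⬝ᵥ v i x) ≤ 2 * ∑ i, #(S i) ^ 2 := by
  let w : ℝ → ι → X → Option ι → ℝ := fun η i x => v i x + η • Pi.single (some i) 1
  let cost : (Option ι → ℝ) → ℝ → ℕ := fun c η =>
    3 * ∑ i, #(sameSidePairs (S i) fun x => c ⬝ᵥ w η i x)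
  let K := Metric.sphere (0 : Option ι → ℝ) 1
  have hcost : LowerSemicontinuous fun z : K × ℝ => cost z.1 z.2 := by
    refine (continuous_of_discreteTopology (f := fun k : ℕ => 3 * k)).comp_lowerSemicontinuous
      (lowerSemicontinuous_sum fun i _ => ?_) fun _ _ h => Nat.mul_le_mul_left 3 h
    exact lowerSemicontinuous_card_sameSidePairs (S i) fun x => by fun_prop
  let good : Set ℝ :=
    Prod.snd '' ((fun z : K × ℝ => cost z.1 z.2) ⁻¹' Set.Iic (2 * ∑ i, #(S i) ^ 2))
  have hgood : IsClosed good :=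
    isClosedMap_snd_of_compactSpace _ (hcost.isClosed_preimage _)
  let bad : Set ℝ := ⋃ p ∈ Fintype.piFinset S, {η | spanForm (fun i => w η i (p i)) = 0}
  have hbad : bad.Finite := Set.Finite.biUnion (finite_toSet _) fun p _ =>
    finite_setOf_spanForm_add_smul_single_eq_zero fun i => v i (p i)
  have hbad_good : badᶜ ⊆ good := fun η hη => by
    obtain ⟨φ, hφ, hle⟩ := exists_dual_card_sameSidePairs_le_of_spanForm_ne_zero (w η) S hS
      fun p hp h => hη (Set.mem_biUnion hp h)
    obtain ⟨c, rfl⟩ := (dotProductEquiv ℝ (Option ι)).surjective φ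
    have hc : c ≠ 0 := by simpa using hφ
    have hnorm : ‖‖c‖⁻¹ • c‖ = 1 := norm_smul_inv_norm hc
    refine ⟨(⟨‖c‖⁻¹ • c, by simpa [K] using hnorm⟩, η), ?_, rfl⟩
    refine le_of_eq_of_le (congrArg (3 * ·) (sum_congr rfl fun i _ => ?_)) hle
    simp only [smul_dotProduct]
    exact congrArg card (sameSidePairs_const_smul _ _ (inv_ne_zero (norm_ne_zero_iff.2 hc)))
  have huniv : good = Set.univ := Set.univ_subset_iff.1 <|
    (hbad.countable.dense_compl ℝ).closure_eq ▸ closure_minimal hbad_good hgood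
  obtain ⟨⟨⟨c, hc⟩, η⟩, hle, rfl : η = 0⟩ : (0 : ℝ) ∈ good := huniv ▸ Set.mem_univ 0
  refine ⟨c, fun h => by simp [h, K] at hc, ?_⟩
  simpa [cost, w] using hle

lemma exists_mem_span_card_sameSidePairs_le {σ : Type*} {f : Option ι → MvPolynomial σ ℝ}
    (hf : LinearIndependent ℝ f) (S : ι → Finset (σ → ℝ)) (hS : ∀ i, (S i).Nonempty) :
    ∃ g ∈ Submodule.span ℝ (Set.range f), g ≠ 0 ∧
      3 * ∑ i, #(sameSidePairs (S i) fun x => g.eval x) ≤ 2 * ∑ i, #(S i) ^ 2 := by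
  obtain ⟨c, hc, hle⟩ := exists_card_sameSidePairs_dotProduct_le (fun _ x b => (f b).eval x) S hS
  refine ⟨∑ b, c b • f b, Submodule.sum_mem _ fun b _ => Submodule.smul_mem _ _
    (Submodule.subset_span ⟨b, rfl⟩), fun h => hc (funext ?_), ?_⟩
  · exact Fintype.linearIndependent_iff.1 hf c h
  · simpa [dotProduct, MvPolynomial.smul_eval] using hle

/-- **Polynomial ham sandwich**, quantified by same-side pairs. -/
lemma exists_totalDegree_le_card_sameSidePairs_le {d e : ℕ} (hι : Fintype.card ι < e ^ d)
    (S : ι → Finset (Fin d → ℝ)) (hS : ∀ i, (S i).Nonempty) :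
    ∃ g : MvPolynomial (Fin d) ℝ, g ≠ 0 ∧ g.totalDegree ≤ d * e ∧
      3 * ∑ i, #(sameSidePairs (S i) fun x => g.eval x) ≤ 2 * ∑ i, #(S i) ^ 2 := by
  have hcard : Fintype.card (Option ι) ≤ Fintype.card (Fin d → Fin e) := by
    rwa [Fintype.card_option, Fintype.card_fun, Fintype.card_fin, Fintype.card_fin]
  obtain ⟨exponent⟩ := Embedding.nonempty_of_card_le hcard
  let toMonomial : (Fin d → Fin e) → Fin d →₀ ℕ := fun m =>
    Finsupp.equivFunOnFinite.symm fun j => m j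
  have hinj : Injective toMonomial := fun m m' h => by
    ext j
    simpa [toMonomial] using DFunLike.congr_fun h j
  have hindep := (MvPolynomial.basisMonomials (Fin d) ℝ).linearIndependent.comp _
    (hinj.comp exponent.injective)
  obtain ⟨g, hg, hg0, hle⟩ := exists_mem_span_card_sameSidePairs_le hindep S hS
  refine ⟨g, hg0, ?_, hle⟩
  suffices h : Submodule.span ℝ _ ≤ MvPolynomial.restrictTotalDegree (Fin d) ℝ (d * e) from
    (MvPolynomial.mem_restrictTotalDegree _ _ _).1 (h hg)
  rw [Submodule.span_le]
  rintro _ ⟨b, rfl⟩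
  rw [SetLike.mem_coe, MvPolynomial.mem_restrictTotalDegree]
  calc _ ≤ ∑ j, (toMonomial (exponent b)) j := by
        rw [← Finsupp.sum_fintype (toMonomial (exponent b)) (fun _ k => k) (fun _ => rfl)]
        exact MvPolynomial.totalDegree_monomial_le _ _
    _ ≤ ∑ _j : Fin d, e := sum_le_sum fun j _ => (exponent b j).2.le
    _ = d * e := by simp

end Splitting

section Partition

open Finset

variable {σ : Type*} (P : Finset (σ → ℝ)) (gs : List (MvPolynomial σ ℝ))

/-- The signs at `x` of the polynomials in `gs`; sign vectors without zero entries label the open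
cells cut out by the zero sets of these polynomials. -/
def signVector (x : σ → ℝ) : List SignType :=
  gs.map fun g => SignType.sign (g.eval x)

/-- The points of `P` with sign vector `τ`. -/
def cell (τ : List SignType) : Finset (σ → ℝ) :=
  P.filter fun x => signVector gs x = τ

/-- The labels of the cells that contain points of `P` and avoid the zero sets of `gs`. -/
def openCells : Finset (List SignType) :=
  (P.image (signVector gs)).filter fun τ => 0 ∉ τ

/-- The labels of the open cells containing more than the fraction `1 / r` of the points of `P`. -/
def heavyCells (r : ℕ) : Finset (List SignType) :=
  (openCells P gs).filter fun τ => #P < r * #(cell P gs τ)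

variable {P gs}

lemma zero_mem_signVector_iff {x : σ → ℝ} : 0 ∈ signVector gs x ↔ gs.prod.eval x = 0 := by
  simp [signVector, map_list_prod, List.prod_eq_zero_iff]

lemma signVector_eq_of_isPreconnected {C : Set (σ → ℝ)} (hC : IsPreconnected C)
    (hgs : ∀ x ∈ C, gs.prod.eval x ≠ 0) {x y : σ → ℝ} (hx : x ∈ C) (hy : y ∈ C) :
    signVector gs x = signVector gs y := by
  refine List.map_congr_left fun g hg => hC.constant
    (f := fun z => SignType.sign (g.eval z)) (fun z hz => ?_) hx hy
  have hgz : g.eval z ≠ 0 := fun h => hgs z hz <| by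
    rw [map_list_prod]
    exact List.prod_eq_zero (List.mem_map.2 ⟨g, hg, h⟩)
  exact (ContinuousAt.comp (f := fun z => g.eval z) (continuousAt_sign_of_ne_zero hgz)
    (MvPolynomial.continuous_eval g).continuousAt).continuousWithinAt

lemma mem_cell {τ : List SignType} {x : σ → ℝ} :
    x ∈ cell P gs τ ↔ x ∈ P ∧ signVector gs x = τ :=
  mem_filter

lemma cell_nonempty {τ : List SignType} (hτ : τ ∈ openCells P gs) : (cell P gs τ).Nonempty := by
  obtain ⟨x, hx, rfl⟩ := mem_image.1 (mem_filter.1 hτ).1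
  exact ⟨x, mem_cell.2 ⟨hx, rfl⟩⟩

lemma sum_openCells_add_sum_zeroSet (F : (σ → ℝ) → ℕ) :
    ∑ τ ∈ openCells P gs, ∑ x ∈ cell P gs τ, F x + ∑ x ∈ P with gs.prod.eval x = 0, F x
      = ∑ x ∈ P, F x := by
  rw [← sum_filter_not_add_sum_filter P (fun x => gs.prod.eval x = 0)]
  congr 1
  have hmaps : ∀ x ∈ P.filter (fun x => ¬gs.prod.eval x = 0), signVector gs x ∈ openCells P gs := by
    intro x hx
    rw [mem_filter, ← zero_mem_signVector_iff] at hx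
    exact mem_filter.2 ⟨mem_image_of_mem _ hx.1, hx.2⟩
  rw [← sum_fiberwise_of_maps_to hmaps]
  refine sum_congr rfl fun τ hτ => sum_congr ?_ fun _ _ => rfl
  ext x
  simp only [mem_cell, mem_filter, ← zero_mem_signVector_iff]
  refine ⟨fun ⟨hx, hxτ⟩ => ⟨⟨hx, hxτ ▸ (mem_filter.1 hτ).2⟩, hxτ⟩, fun ⟨⟨hx, _⟩, hxτ⟩ => ⟨hx, hxτ⟩⟩

lemma sum_card_cell_add_card_zeroSet :
    ∑ τ ∈ openCells P gs, #(cell P gs τ) + #{x ∈ P | gs.prod.eval x = 0} = #P := by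
  simpa using sum_openCells_add_sum_zeroSet (P := P) (gs := gs) fun _ => 1

lemma card_heavyCells_lt {r : ℕ} (hr : 0 < r) : #(heavyCells P gs r) < r := by
  rcases (heavyCells P gs r).eq_empty_or_nonempty with h | h
  · rwa [h, card_empty]
  refine lt_of_mul_lt_mul_right (a := #P) ?_ (Nat.zero_le _)
  calc #(heavyCells P gs r) * #P = ∑ _τ ∈ heavyCells P gs r, #P := by simp
    _ < ∑ τ ∈ heavyCells P gs r, r * #(cell P gs τ) :=
        sum_lt_sum_of_nonempty h fun τ hτ => (mem_filter.1 hτ).2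
    _ ≤ r * ∑ τ ∈ openCells P gs, #(cell P gs τ) := by
        rw [← mul_sum]
        exact Nat.mul_le_mul_left _ (sum_le_sum_of_subset (filter_subset _ _))
    _ ≤ r * #P := Nat.mul_le_mul_left _ (by
        rw [← sum_card_cell_add_card_zeroSet (P := P) (gs := gs)]
        exact Nat.le_add_right _ _)

lemma cell_cons_subset (g : MvPolynomial σ ℝ) (a : SignType) (τ : List SignType) :
    cell P (g :: gs) (a :: τ) ⊆ cell P gs τ := fun x hx => by
  rw [mem_cell, signVector, List.map_cons, List.cons.injEq] at hx
  exact mem_cell.2 ⟨hx.1, hx.2.2⟩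

lemma sum_sq_card_heavyCells_cons_le (g : MvPolynomial σ ℝ) (r : ℕ) :
    ∑ τ ∈ heavyCells P (g :: gs) r, #(cell P (g :: gs) τ) ^ 2
      ≤ ∑ τ ∈ heavyCells P gs r, #(sameSidePairs (cell P gs τ) fun x => g.eval x) := by
  have hdisj : (heavyCells P (g :: gs) r : Set (List SignType)).PairwiseDisjoint
      fun τ => cell P (g :: gs) τ ×ˢ cell P (g :: gs) τ := fun τ _ τ' _ hne =>
    disjoint_left.2 fun z hz hz' => hne <|
      (mem_cell.1 (mem_product.1 hz).1).2.symm.trans (mem_cell.1 (mem_product.1 hz').1).2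
  simp_rw [sq, ← card_product]
  rw [← card_biUnion hdisj]
  refine (card_le_card fun z hz => ?_).trans card_biUnion_le
  obtain ⟨τ, hτ, hz⟩ := mem_biUnion.1 hz
  obtain ⟨hz₁, hz₂⟩ := mem_product.1 hz
  obtain ⟨hτ, hlarge⟩ := mem_filter.1 hτ
  obtain ⟨hτ, h0⟩ := mem_filter.1 hτ
  obtain rfl : SignType.sign (g.eval z.1) :: signVector gs z.1 = τ := (mem_cell.1 hz₁).2
  have hsub := cell_cons_subset (P := P) (gs := gs) g (SignType.sign (g.eval z.1))
    (signVector gs z.1)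
  have hsign : SignType.sign (g.eval z.2) = SignType.sign (g.eval z.1) :=
    (List.cons.inj (mem_cell.1 hz₂).2).1
  have hmul_self : ∀ a : SignType, 0 ≠ a → a * a = 1 := by decide
  refine mem_biUnion.2 ⟨signVector gs z.1, mem_filter.2 ⟨mem_filter.2 ⟨?_, ?_⟩, ?_⟩, ?_⟩
  · exact mem_image_of_mem _ (mem_cell.1 hz₁).1
  · exact fun h => h0 (List.mem_cons_of_mem _ h)
  · exact hlarge.trans_le (Nat.mul_le_mul_left _ (card_le_card hsub))
  · refine mem_filter.2 ⟨mem_product.2 ⟨hsub hz₁, hsub hz₂⟩, ?_⟩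
    rw [← sign_eq_one_iff, sign_mul, hsign]
    exact hmul_self _ fun h => h0 (h ▸ List.mem_cons_self)

lemma exists_cons_sum_sq_card_heavyCells_le {d e : ℕ} (he : 0 < e) (P : Finset (Fin d → ℝ))
    (gs : List (MvPolynomial (Fin d) ℝ)) :
    ∃ g : MvPolynomial (Fin d) ℝ, g ≠ 0 ∧ g.totalDegree ≤ d * e ∧
      3 * ∑ τ ∈ heavyCells P (g :: gs) (e ^ d), #(cell P (g :: gs) τ) ^ 2
        ≤ 2 * ∑ τ ∈ heavyCells P gs (e ^ d), #(cell P gs τ) ^ 2 := by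
  have hcard : Fintype.card (heavyCells P gs (e ^ d)) < e ^ d := by
    rw [Fintype.card_coe]
    exact card_heavyCells_lt (pow_pos he d)
  obtain ⟨g, hg0, hgd, hg⟩ := exists_totalDegree_le_card_sameSidePairs_le hcard
    (fun τ => cell P gs τ) fun τ => cell_nonempty (mem_filter.1 τ.2).1
  refine ⟨g, hg0, hgd, ?_⟩
  rw [← sum_coe_sort (heavyCells P gs (e ^ d)) fun τ => #(cell P gs τ) ^ 2]
  refine le_trans (Nat.mul_le_mul_left 3 ?_) hg
  rw [sum_coe_sort (heavyCells P gs (e ^ d)) fun τ =>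
    #(sameSidePairs (cell P gs τ) fun x => g.eval x)]
  exact sum_sq_card_heavyCells_cons_le g _

lemma exists_sum_sq_card_heavyCells_le {d e : ℕ} (he : 0 < e) (P : Finset (Fin d → ℝ)) (J : ℕ) :
    ∃ gs : List (MvPolynomial (Fin d) ℝ), gs.prod ≠ 0 ∧ gs.prod.totalDegree ≤ J * (d * e) ∧
      3 ^ J * ∑ τ ∈ heavyCells P gs (e ^ d), #(cell P gs τ) ^ 2 ≤ 2 ^ J * #P ^ 2 := by
  induction J with
  | zero =>
    refine ⟨[], by simp, by simp, ?_⟩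
    have hsub : heavyCells P [] (e ^ d) ⊆ {[]} :=
      (filter_subset _ _).trans <| (filter_subset _ _).trans <|
        image_subset_iff.2 fun x _ => mem_singleton_self _
    calc 3 ^ 0 * ∑ τ ∈ heavyCells P [] (e ^ d), #(cell P [] τ) ^ 2
        ≤ ∑ τ ∈ {[]}, #(cell P [] τ) ^ 2 := by simpa using sum_le_sum_of_subset hsub
      _ ≤ 2 ^ 0 * #P ^ 2 := by
        rw [sum_singleton, pow_zero, one_mul]
        exact Nat.pow_le_pow_left (card_le_card (filter_subset _ _)) 2
  | succ J ih =>
    obtain ⟨gs, hgs0, hgsd, hgs⟩ := ih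
    obtain ⟨g, hg0, hgd, hg⟩ := exists_cons_sum_sq_card_heavyCells_le he P gs
    refine ⟨g :: gs, by simpa using mul_ne_zero hg0 hgs0, ?_, ?_⟩
    · rw [List.prod_cons]
      linarith [MvPolynomial.totalDegree_mul g gs.prod]
    · calc 3 ^ (J + 1) * ∑ τ ∈ heavyCells P (g :: gs) (e ^ d), #(cell P (g :: gs) τ) ^ 2
          = 3 ^ J * (3 * ∑ τ ∈ heavyCells P (g :: gs) (e ^ d), #(cell P (g :: gs) τ) ^ 2) := by
            ring
        _ ≤ 3 ^ J * (2 * ∑ τ ∈ heavyCells P gs (e ^ d), #(cell P gs τ) ^ 2) :=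
            Nat.mul_le_mul_left _ hg
        _ = 2 * (3 ^ J * ∑ τ ∈ heavyCells P gs (e ^ d), #(cell P gs τ) ^ 2) := by ring
        _ ≤ 2 * (2 ^ J * #P ^ 2) := Nat.mul_le_mul_left _ hgs
        _ = 2 ^ (J + 1) * #P ^ 2 := by ring

/-- The degree of a polynomial in `d` variables whose zero set partitions any finite set into cells
containing at most the fraction `2 ^ (-d * s)` of its points: a product of `4 * d * s` polynomials
of degree at most `d * 2 ^ s`. -/
def partitionDegree (d s : ℕ) : ℕ := 4 * d * s * (d * 2 ^ s)

/-- **Polynomial partitioning**. The `4 * d * s` splitting steps multiply the sum of squares by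
`(2 / 3) ^ (4 * d * s) ≤ 2 ^ (-2 * d * s)`, and a single heavy cell would exceed what is left. -/
lemma exists_partition {d : ℕ} (s : ℕ) (P : Finset (Fin d → ℝ)) :
    ∃ gs : List (MvPolynomial (Fin d) ℝ), gs.prod ≠ 0 ∧
      gs.prod.totalDegree ≤ partitionDegree d s ∧
      ∀ τ ∈ openCells P gs, 2 ^ (d * s) * #(cell P gs τ) ≤ #P := by
  obtain ⟨gs, hgs0, hgsd, hgs⟩ :=
    exists_sum_sq_card_heavyCells_le (Nat.two_pow_pos s) P (4 * d * s)
  refine ⟨gs, hgs0, hgsd, fun τ hτ => ?_⟩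
  by_contra! hlt
  have hr : (2 ^ s) ^ d = 2 ^ (d * s) := by rw [← pow_mul, mul_comm]
  rw [hr] at hgs
  have hτ_heavy : τ ∈ heavyCells P gs (2 ^ (d * s)) := mem_filter.2 ⟨hτ, hlt⟩
  have hsingle : #(cell P gs τ) ^ 2 ≤ ∑ τ ∈ heavyCells P gs (2 ^ (d * s)), #(cell P gs τ) ^ 2 :=
    single_le_sum (f := fun τ => #(cell P gs τ) ^ 2) (fun _ _ => Nat.zero_le _) hτ_heavy
  have hpow : 2 ^ (4 * d * s) * (2 ^ (d * s)) ^ 2 ≤ 3 ^ (4 * d * s) := by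
    calc 2 ^ (4 * d * s) * (2 ^ (d * s)) ^ 2 = (2 ^ 6) ^ (d * s) := by
          rw [← pow_mul, ← pow_mul, ← pow_add]
          ring
      _ ≤ (3 ^ 4) ^ (d * s) := Nat.pow_le_pow_left (by norm_num) _
      _ = 3 ^ (4 * d * s) := by rw [← pow_mul, mul_assoc]
  have hcontra : 3 ^ (4 * d * s) * #P ^ 2 < 3 ^ (4 * d * s) * #P ^ 2 := by
    calc 3 ^ (4 * d * s) * #P ^ 2
        < 3 ^ (4 * d * s) * (2 ^ (d * s) * #(cell P gs τ)) ^ 2 := by gcongr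
      _ = (2 ^ (d * s)) ^ 2 * (3 ^ (4 * d * s) * #(cell P gs τ) ^ 2) := by ring
      _ ≤ (2 ^ (d * s)) ^ 2 * (2 ^ (4 * d * s) * #P ^ 2) :=
          Nat.mul_le_mul_left _ ((Nat.mul_le_mul_left _ hsingle).trans hgs)
      _ = 2 ^ (4 * d * s) * (2 ^ (d * s)) ^ 2 * #P ^ 2 := by ring
      _ ≤ 3 ^ (4 * d * s) * #P ^ 2 := Nat.mul_le_mul_right _ hpow
  exact lt_irrefl _ hcontra

end Partition

section Lines

open Finset

variable {d : ℕ}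

/-- The restriction of `f` to the line `t ↦ a + t • b`, as a polynomial in `t`. -/
def alongLine (f : MvPolynomial (Fin d) ℝ) (a b : Fin d → ℝ) : Polynomial ℝ :=
  MvPolynomial.aeval (fun i => Polynomial.C (b i) * Polynomial.X + Polynomial.C (a i)) f

lemma eval_alongLine (f : MvPolynomial (Fin d) ℝ) (a b : Fin d → ℝ) (t : ℝ) :
    (alongLine f a b).eval t = f.eval (a + t • b) := by
  have hcomp : (Polynomial.aeval t).comp
      (MvPolynomial.aeval fun i => Polynomial.C (b i) * Polynomial.X + Polynomial.C (a i))
      = MvPolynomial.aeval (R := ℝ) (a + t • b) := by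
    ext i
    simp [add_comm (a i), mul_comm (b i)]
  simpa [alongLine, MvPolynomial.aeval_eq_eval] using DFunLike.congr_fun hcomp f

lemma natDegree_alongLine_le (f : MvPolynomial (Fin d) ℝ) (a b : Fin d → ℝ) :
    (alongLine f a b).natDegree ≤ f.totalDegree := by
  simpa [alongLine] using MvPolynomial.aeval_natDegree_le f le_rfl _ fun i =>
    Polynomial.natDegree_linear_le (a := b i) (b := a i)

lemma card_roots_alongLine_le (f : MvPolynomial (Fin d) ℝ) (a b : Fin d → ℝ) :
    #(alongLine f a b).roots.toFinset ≤ f.totalDegree :=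
  (Multiset.toFinset_card_le _).trans <|
    (Polynomial.card_roots' _).trans (natDegree_alongLine_le f a b)

lemma mem_roots_alongLine {f : MvPolynomial (Fin d) ℝ} {a b : Fin d → ℝ} {t : ℝ} :
    t ∈ (alongLine f a b).roots.toFinset
      ↔ ¬{x | ∃ t : ℝ, x = a + t • b} ⊆ zeroSet f ∧ f.eval (a + t • b) = 0 := by
  have hzero : alongLine f a b = 0 ↔ {x | ∃ t : ℝ, x = a + t • b} ⊆ zeroSet f := by
    constructor
    · rintro h _ ⟨t, rfl⟩
      rw [zeroSet, Set.mem_ofPred_eq, ← eval_alongLine, h, Polynomial.eval_zero]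
    · exact fun h => Polynomial.funext fun t => by
        rw [eval_alongLine, Polynomial.eval_zero]
        exact h ⟨t, rfl⟩
  rw [Multiset.mem_toFinset, Polynomial.mem_roots', Polynomial.IsRoot, eval_alongLine, Ne, hzero]

namespace IsLine

variable {l l' : Set (Fin d → ℝ)}

lemma card_le_totalDegree (hl : IsLine l) {f : MvPolynomial (Fin d) ℝ} (hf : ¬l ⊆ zeroSet f)
    {Q : Finset (Fin d → ℝ)} (hQ : (Q : Set (Fin d → ℝ)) ⊆ l ∩ zeroSet f) :
    #Q ≤ f.totalDegree := by
  obtain ⟨a, b, -, rfl⟩ := hl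
  refine le_trans ?_ (card_roots_alongLine_le f a b)
  refine (card_le_card fun p hp => ?_).trans (card_image_le (f := fun t : ℝ => a + t • b))
  obtain ⟨⟨t, rfl⟩, ht⟩ := hQ hp
  exact mem_image.2 ⟨t, mem_roots_alongLine.2 ⟨hf, ht⟩, rfl⟩

/-- Between points of the line in different cells there is a zero of `gs.prod`. -/
lemma card_openCells_meeting_le (hl : IsLine l) (P : Finset (Fin d → ℝ))
    (gs : List (MvPolynomial (Fin d) ℝ)) :
    #{τ ∈ openCells P gs | ∃ p ∈ cell P gs τ, p ∈ l} ≤ gs.prod.totalDegree + 1 := by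
  obtain ⟨a, b, -, rfl⟩ := hl
  set T := {τ ∈ openCells P gs | ∃ p ∈ cell P gs τ, p ∈ {x | ∃ t : ℝ, x = a + t • b}}
  have hparam : ∀ τ ∈ T, ∃ t : ℝ, signVector gs (a + t • b) = τ := by
    rintro τ hτ
    obtain ⟨-, p, hp, t, rfl⟩ := mem_filter.1 hτ
    exact ⟨t, (mem_cell.1 hp).2⟩
  choose! param hparam using hparam
  have hne : ∀ τ ∈ T, gs.prod.eval (a + param τ • b) ≠ 0 := fun τ hτ h => by
    rw [← zero_mem_signVector_iff, hparam τ hτ] at h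
    exact (mem_filter.1 (mem_filter.1 hτ).1).2 h
  have hinj : Set.InjOn param T := fun τ hτ τ' hτ' h => by
    rw [← hparam τ hτ, ← hparam τ' hτ', h]
  rw [← card_image_of_injOn hinj]
  refine le_trans (card_le_of_interleaved ?_)
    (Nat.add_le_add_right (card_roots_alongLine_le gs.prod a b) 1)
  simp only [mem_image]
  rintro _ ⟨τ, hτ, rfl⟩ _ ⟨τ', hτ', rfl⟩ hlt -
  by_contra! hno_root
  have hsegment : IsPreconnected ((fun t : ℝ => a + t • b) '' Set.Icc (param τ) (param τ')) :=
    isPreconnected_Icc.image _ (by fun_prop)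
  have heq : τ = τ' := by
    rw [← hparam τ hτ, ← hparam τ' hτ']
    refine signVector_eq_of_isPreconnected hsegment ?_
      ⟨_, Set.left_mem_Icc.2 hlt.le, rfl⟩ ⟨_, Set.right_mem_Icc.2 hlt.le, rfl⟩
    rintro _ ⟨t, ht, rfl⟩ h
    have hroot := mem_roots_alongLine.2 ⟨fun hsub => hne τ hτ (hsub ⟨_, rfl⟩), h⟩
    rcases ht.1.eq_or_lt with rfl | hlt'
    · exact hne τ hτ h
    · exact hne τ' hτ' (ht.2.antisymm (hno_root t hroot hlt') ▸ h)
  exact hlt.ne (congrArg param heq)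

lemma eq_setOf_of_mem (hl : IsLine l) {p q : Fin d → ℝ} (hp : p ∈ l) (hq : q ∈ l) (hpq : p ≠ q) :
    l = {x | ∃ t : ℝ, x = p + t • (q - p)} := by
  obtain ⟨a, b, -, rfl⟩ := hl
  obtain ⟨s, rfl⟩ := hp
  obtain ⟨t, rfl⟩ := hq
  have hst : t - s ≠ 0 := sub_ne_zero.2 fun h => hpq (by rw [h])
  have hdir : a + t • b - (a + s • b) = (t - s) • b := by module
  ext x
  constructor
  · rintro ⟨r, rfl⟩
    refine ⟨(r - s) / (t - s), ?_⟩
    rw [hdir, smul_smul, div_mul_cancel₀ _ hst]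
    module
  · rintro ⟨r, rfl⟩
    exact ⟨s + r * (t - s), by rw [hdir]; module⟩

lemma eq_of_mem (hl : IsLine l) (hl' : IsLine l') {p q : Fin d → ℝ} (hpq : p ≠ q) (hp : p ∈ l)
    (hq : q ∈ l) (hp' : p ∈ l') (hq' : q ∈ l') : l = l' :=
  (hl.eq_setOf_of_mem hp hq hpq).trans (hl'.eq_setOf_of_mem hp' hq' hpq).symm

lemma subsingleton_inter (hl : IsLine l) (hl' : IsLine l') (hne : l ≠ l') :
    (l ∩ l').Subsingleton := fun _ hp _ hq => by
  by_contra hpq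
  exact hne (hl.eq_of_mem hl' hpq hp.1 hq.1 hp.2 hq.2)

lemma exists_mem_notMem (hl : IsLine l) (hl' : IsLine l') (hne : l ≠ l') : ∃ p ∈ l, p ∉ l' := by
  obtain ⟨a, b, hb, rfl⟩ := id hl
  by_contra! hsub
  have ha : a ∈ {x | ∃ t : ℝ, x = a + t • b} := ⟨0, by rw [zero_smul, add_zero]⟩
  have hab : a + b ∈ {x | ∃ t : ℝ, x = a + t • b} := ⟨1, by rw [one_smul]⟩
  exact hb <| left_eq_add.1 <|
    hl.subsingleton_inter hl' hne ⟨ha, hsub _ ha⟩ ⟨hab, hsub _ hab⟩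

end IsLine

end Lines

section Incidences

open Finset

variable {d : ℕ} {P : Finset (Fin d → ℝ)} {C : Finset (Set (Fin d → ℝ))}

lemma incidences_eq_sum_curves : Incidences P C = ∑ γ ∈ C, #{p ∈ P | p ∈ γ} := by
  rw [Incidences, card_filter, sum_product_right]
  simp only [card_filter]

lemma incidences_eq_sum_points : Incidences P C = ∑ p ∈ P, #{γ ∈ C | p ∈ γ} := by
  rw [Incidences, card_filter, sum_product]
  simp only [card_filter]

lemma incidences_le_mul : Incidences P C ≤ #P * #C :=
  (card_filter_le _ _).trans (card_product _ _).le

/-- A curve with `k` incidences contributes `k ≤ k * (k - 1) + 1`, and the `k * (k - 1)` pairs of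
distinct points on it lie on no other curve of the family. -/
lemma incidences_le_sq_add
    (hC : (C : Set (Set (Fin d → ℝ))).Pairwise fun γ γ' => (γ ∩ γ').Subsingleton) :
    Incidences P C ≤ #P ^ 2 + #C := by
  have hdisj : (C : Set (Set (Fin d → ℝ))).PairwiseDisjoint fun γ => {p ∈ P | p ∈ γ}.offDiag :=
    fun γ hγ γ' hγ' hne => disjoint_left.2 fun z hz hz' => by
      simp only [mem_offDiag, mem_filter] at hz hz'
      exact hz.2.2 (hC hγ hγ' hne ⟨hz.1.2, hz'.1.2⟩ ⟨hz.2.1.2, hz'.2.1.2⟩)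
  calc Incidences P C = ∑ γ ∈ C, #{p ∈ P | p ∈ γ} := incidences_eq_sum_curves
    _ ≤ ∑ γ ∈ C, (#{p ∈ P | p ∈ γ}.offDiag + 1) := sum_le_sum fun γ _ => by
        rw [offDiag_card]
        rcases Nat.eq_zero_or_pos #{p ∈ P | p ∈ γ} with h | h
        · exact h ▸ Nat.zero_le _
        · rw [← Nat.sub_le_iff_le_add, ← Nat.mul_sub_one]
          exact Nat.le_mul_of_pos_left _ h
    _ = #(C.biUnion fun γ => {p ∈ P | p ∈ γ}.offDiag) + #C := by
        rw [card_biUnion hdisj, sum_add_distrib, card_eq_sum_ones C]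
    _ ≤ #P ^ 2 + #C := by
        rw [sq, ← card_product]
        gcongr
        refine biUnion_subset.2 fun γ _ z hz => ?_
        rw [mem_offDiag] at hz
        exact mem_product.2 ⟨mem_of_mem_filter _ hz.1, mem_of_mem_filter _ hz.2.1⟩

/-- The curves of `C` passing through some point of `Q`. -/
def meeting (C : Finset (Set (Fin d → ℝ))) (Q : Finset (Fin d → ℝ)) :
    Finset (Set (Fin d → ℝ)) :=
  C.filter fun γ => ∃ p ∈ Q, p ∈ γ

lemma incidences_meeting : Incidences P (meeting C P) = Incidences P C := by
  simp only [incidences_eq_sum_points, meeting, filter_filter]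
  refine sum_congr rfl fun p hp => congrArg card (filter_congr fun γ _ => ?_)
  exact and_iff_right_of_imp fun hpγ => ⟨p, hp, hpγ⟩

variable {L : Finset (Set (Fin d → ℝ))} (hL : ∀ l ∈ L, IsLine l)
include hL

lemma pairwise_subsingleton_inter_of_isLine :
    (L : Set (Set (Fin d → ℝ))).Pairwise fun l l' => (l ∩ l').Subsingleton :=
  fun l hl l' hl' hne => (hL l hl).subsingleton_inter (hL l' hl') hne

lemma sum_card_meeting_cell_le (gs : List (MvPolynomial (Fin d) ℝ)) :
    ∑ τ ∈ openCells P gs, #(meeting L (cell P gs τ)) ≤ (gs.prod.totalDegree + 1) * #L := by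
  calc ∑ τ ∈ openCells P gs, #(meeting L (cell P gs τ))
      = ∑ l ∈ L, #{τ ∈ openCells P gs | ∃ p ∈ cell P gs τ, p ∈ l} :=
        sum_card_bipartiteAbove_eq_sum_card_bipartiteBelow _
    _ ≤ ∑ _l ∈ L, (gs.prod.totalDegree + 1) :=
        sum_le_sum fun l hl => (hL l hl).card_openCells_meeting_le P gs
    _ = (gs.prod.totalDegree + 1) * #L := by rw [sum_const, smul_eq_mul, mul_comm]

lemma incidences_zeroSet_le (f : MvPolynomial (Fin d) ℝ) :
    Incidences {p ∈ P | f.eval p = 0} L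
      ≤ Incidences {p ∈ P | f.eval p = 0} {l ∈ L | l ⊆ zeroSet f} + f.totalDegree * #L := by
  rw [incidences_eq_sum_curves, incidences_eq_sum_curves,
    ← sum_filter_add_sum_filter_not L (· ⊆ zeroSet f)]
  gcongr
  calc ∑ l ∈ L with ¬l ⊆ zeroSet f, #{p ∈ {p ∈ P | f.eval p = 0} | p ∈ l}
      ≤ ∑ l ∈ L with ¬l ⊆ zeroSet f, f.totalDegree := sum_le_sum fun l hl => by
        rw [mem_filter] at hl
        refine (hL l hl.1).card_le_totalDegree hl.2 fun p hp => ?_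
        simp only [coe_filter, mem_filter] at hp
        exact ⟨hp.2, hp.1.2⟩
    _ ≤ f.totalDegree * #L := by
        rw [sum_const, smul_eq_mul, mul_comm]
        exact Nat.mul_le_mul_left _ (card_filter_le _ _)

lemma incidences_le_sum_openCells_add (gs : List (MvPolynomial (Fin d) ℝ)) :
    Incidences P L ≤ ∑ τ ∈ openCells P gs,
        Incidences (cell P gs τ) (meeting L (cell P gs τ))
      + Incidences {p ∈ P | gs.prod.eval p = 0} {l ∈ L | l ⊆ zeroSet gs.prod}
      + gs.prod.totalDegree * #L := by
  simp only [incidences_meeting]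
  rw [add_assoc]
  refine le_trans (le_of_eq ?_) (Nat.add_le_add_left (incidences_zeroSet_le hL gs.prod) _)
  simp only [incidences_eq_sum_points]
  exact (sum_openCells_add_sum_zeroSet fun p => #{l ∈ L | p ∈ l}).symm

end Incidences

section Recursion

open Finset

/-- Distributing `m` points and `n` lines over cells, each containing at most the fraction `1 / r`
of the points, so that the lines are counted at most `D` times on average, multiplies the total
of the incidence bound `Φ` by at most `θ`. -/
def PartitionContracts (r D θ : ℝ) (Φ : ℝ → ℝ → ℝ) : Prop :=
  ∀ ⦃κ : Type⦄ (T : Finset κ) (x y : κ → ℝ) ⦃m n : ℝ⦄, 0 ≤ m → 0 ≤ n →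
    (∀ c ∈ T, 0 ≤ x c ∧ 0 ≤ y c ∧ r * x c ≤ m) → ∑ c ∈ T, x c ≤ m → ∑ c ∈ T, y c ≤ D * n →
    ∑ c ∈ T, Φ (x c) (y c) ≤ θ * Φ m n

section PartitionContracts

variable {r D θ : ℝ} {Φ Ψ : ℝ → ℝ → ℝ}

lemma PartitionContracts.add (hΦ : PartitionContracts r D θ Φ) (hΨ : PartitionContracts r D θ Ψ) :
    PartitionContracts r D θ fun m n => Φ m n + Ψ m n := fun _ T x y m n hm hn hxy hx hy => by
  rw [sum_add_distrib, mul_add]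
  exact add_le_add (hΦ T x y hm hn hxy hx hy) (hΨ T x y hm hn hxy hx hy)

lemma PartitionContracts.mul_const (hΦ : PartitionContracts r D θ Φ) {a : ℝ} (ha : 0 ≤ a) :
    PartitionContracts r D θ fun m n => Φ m n * a := fun _ T x y m n hm hn hxy hx hy => by
  rw [← sum_mul, ← mul_assoc]
  exact mul_le_mul_of_nonneg_right (hΦ T x y hm hn hxy hx hy) ha

lemma sum_rpow_mul_rpow_le {κ : Type*} {T : Finset κ} {x y : κ → ℝ} {b : ℝ} (hb₀ : 0 < b)
    (hb₁ : b < 1) (hx : ∀ c ∈ T, 0 ≤ x c) (hy : ∀ c ∈ T, 0 ≤ y c) :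
    ∑ c ∈ T, x c ^ (1 - b) * y c ^ b ≤ (∑ c ∈ T, x c) ^ (1 - b) * (∑ c ∈ T, y c) ^ b := by
  have hb' : 0 < 1 - b := sub_pos.2 hb₁
  have hconj : (1 - b)⁻¹.HolderConjugate b⁻¹ := Real.holderConjugate_iff.2
    ⟨(one_lt_inv₀ hb').2 (sub_lt_self 1 hb₀), by rw [inv_inv, inv_inv, sub_add_cancel]⟩
  have hpow_x : ∑ c ∈ T, (x c ^ (1 - b)) ^ (1 - b)⁻¹ = ∑ c ∈ T, x c :=
    sum_congr rfl fun c hc => Real.rpow_rpow_inv (hx c hc) hb'.ne'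
  have hpow_y : ∑ c ∈ T, (y c ^ b) ^ b⁻¹ = ∑ c ∈ T, y c :=
    sum_congr rfl fun c hc => Real.rpow_rpow_inv (hy c hc) hb₀.ne'
  simpa only [hpow_x, hpow_y, one_div, inv_inv] using Real.inner_le_Lp_mul_Lq_of_nonneg T hconj
    (fun c hc => Real.rpow_nonneg (hx c hc) (1 - b)) (fun c hc => Real.rpow_nonneg (hy c hc) b)

lemma partitionContracts_rpow_mul_rpow {g b : ℝ} (hb₀ : 0 < b) (hb₁ : b < 1) (hg : 0 ≤ g)
    (hr : 0 < r) (hD : 0 ≤ D) (hθ : (1 / r) ^ g * D ^ b ≤ θ) :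
    PartitionContracts r D θ fun m n => m ^ (1 - b + g) * n ^ b := by
  intro κ T x y m n hm hn hxy hxm hyn
  have hx : ∀ c ∈ T, 0 ≤ x c := fun c hc => (hxy c hc).1
  have hy : ∀ c ∈ T, 0 ≤ y c := fun c hc => (hxy c hc).2.1
  have hb' : 0 ≤ 1 - b := sub_nonneg.2 hb₁.le
  have hcell : ∀ c ∈ T, x c ^ g ≤ (1 / r * m) ^ g := fun c hc => by
    refine Real.rpow_le_rpow (hx c hc) ?_ hg
    rw [one_div, ← div_eq_inv_mul, le_div_iff₀' hr]
    exact (hxy c hc).2.2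
  calc ∑ c ∈ T, x c ^ (1 - b + g) * y c ^ b
      ≤ ∑ c ∈ T, (1 / r * m) ^ g * (x c ^ (1 - b) * y c ^ b) := sum_le_sum fun c hc => by
        rw [Real.rpow_add_of_nonneg (hx c hc) hb' hg, mul_comm (x c ^ (1 - b)), mul_assoc]
        exact mul_le_mul_of_nonneg_right (hcell c hc) <|
          mul_nonneg (Real.rpow_nonneg (hx c hc) _) (Real.rpow_nonneg (hy c hc) _)
    _ ≤ (1 / r * m) ^ g * ((∑ c ∈ T, x c) ^ (1 - b) * (∑ c ∈ T, y c) ^ b) := by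
        rw [← mul_sum]
        gcongr
        exact sum_rpow_mul_rpow_le hb₀ hb₁ hx hy
    _ ≤ (1 / r * m) ^ g * (m ^ (1 - b) * (D * n) ^ b) := by
        have hsum_x := sum_nonneg hx
        have hsum_y := sum_nonneg hy
        gcongr
    _ = (1 / r) ^ g * D ^ b * (m ^ (1 - b + g) * n ^ b) := by
        rw [Real.mul_rpow (by positivity) hm, Real.mul_rpow hD hn,
          Real.rpow_add_of_nonneg hm hb' hg]
        ring
    _ ≤ θ * (m ^ (1 - b + g) * n ^ b) := by gcongr

lemma partitionDegree_add_one_le {d s : ℕ} (hd : 0 < d) (hs : 0 < s) :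
    partitionDegree d s + 1 ≤ 5 * d ^ 2 * s * 2 ^ s := by
  have hone : 1 ≤ d ^ 2 * s * 2 ^ s := Nat.one_le_iff_ne_zero.2 (by positivity)
  rw [partitionDegree]
  linarith

lemma rpow_mul_partitionDegree_rpow_le {d s : ℕ} (hd : 0 < d) (hs : 0 < s) {ε b g : ℝ}
    (hε : 0 ≤ ε) (hb₀ : 0 < b) (hb₁ : b ≤ 1) (hg : b / d + ε ≤ g) :
    (1 / 2 ^ (d * s)) ^ g * ((partitionDegree d s : ℝ) + 1) ^ b
      ≤ 5 * d ^ 2 * (s * ((2 : ℝ) ^ (-ε)) ^ s) := by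
  have hd' : (1 : ℝ) ≤ d := by exact_mod_cast hd
  have hs' : (1 : ℝ) ≤ s := by exact_mod_cast hs
  set K : ℝ := 5 * (d : ℝ) ^ 2 * s
  have hK : 1 ≤ K := one_le_mul_of_one_le_of_one_le
    (one_le_mul_of_one_le_of_one_le (by norm_num) (one_le_pow₀ hd')) hs'
  have hdeg : (partitionDegree d s : ℝ) + 1 ≤ K * 2 ^ s := by
    simp only [K]
    exact_mod_cast partitionDegree_add_one_le hd hs
  have hdeg_rpow : ((partitionDegree d s : ℝ) + 1) ^ b ≤ K * (2 : ℝ) ^ (s * b) := by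
    calc ((partitionDegree d s : ℝ) + 1) ^ b ≤ (K * 2 ^ s) ^ b := by gcongr
      _ = K ^ b * (2 : ℝ) ^ (s * b) := by
        rw [Real.mul_rpow (by positivity) (by positivity), Real.rpow_mul two_pos.le,
          Real.rpow_natCast]
      _ ≤ K * (2 : ℝ) ^ (s * b) := by
        gcongr
        exact Real.rpow_le_self_of_one_le hK hb₁
  have hcells : (1 / (2 : ℝ) ^ (d * s)) ^ g ≤ (2 : ℝ) ^ (-(s * b)) * ((2 : ℝ) ^ (-ε)) ^ s := by
    rw [one_div, ← Real.rpow_natCast, ← Real.rpow_neg two_pos.le, ← Real.rpow_mul two_pos.le,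
      ← Real.rpow_natCast, ← Real.rpow_mul two_pos.le, ← Real.rpow_add two_pos]
    refine Real.rpow_le_rpow_of_exponent_le one_le_two ?_
    have hbg : b + ε ≤ d * g := by
      calc b + ε ≤ d * (b / d) + d * ε := by
            rw [mul_div_cancel₀ _ (by positivity)]
            exact add_le_add_right (le_mul_of_one_le_left hε hd') b
        _ ≤ d * g := by rw [← mul_add]; gcongr
    push_cast
    nlinarith
  calc (1 / (2 : ℝ) ^ (d * s)) ^ g * ((partitionDegree d s : ℝ) + 1) ^ b
      ≤ (2 : ℝ) ^ (-(s * b)) * ((2 : ℝ) ^ (-ε)) ^ s * (K * (2 : ℝ) ^ (s * b)) := by gcongr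
    _ = 5 * (d : ℝ) ^ 2 * (s * ((2 : ℝ) ^ (-ε)) ^ s) * (2 : ℝ) ^ (-(s * b) + s * b) := by
        rw [Real.rpow_add two_pos]
        ring
    _ = 5 * (d : ℝ) ^ 2 * (s * ((2 : ℝ) ^ (-ε)) ^ s) := by
        rw [neg_add_cancel, Real.rpow_zero, mul_one]

lemma exists_partitionContracts {d : ℕ} (hd : 0 < d) {ε : ℝ} (hε : 0 < ε) :
    ∃ s : ℕ, 0 < s ∧ ∀ b g : ℝ, 0 < b → b < 1 → b / d + ε ≤ g →
      PartitionContracts (2 ^ (d * s)) (partitionDegree d s + 1) (1 / 4)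
        fun m n => m ^ (1 - b + g) * n ^ b := by
  have htendsto := (tendsto_self_mul_const_pow_of_lt_one (r := (2 : ℝ) ^ (-ε)) (by positivity)
    (Real.rpow_lt_one_of_one_lt_of_neg one_lt_two (neg_lt_zero.2 hε))).const_mul (5 * (d : ℝ) ^ 2)
  rw [mul_zero] at htendsto
  obtain ⟨s, hs, hs₀⟩ := ((htendsto.eventually_le_const (by norm_num : (0 : ℝ) < 1 / 4)).and
    (Filter.eventually_gt_atTop 0)).exists
  refine ⟨s, hs₀, fun b g hb₀ hb₁ hg => ?_⟩
  have hg₀ : 0 ≤ g := le_trans (by positivity) hg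
  exact partitionContracts_rpow_mul_rpow hb₀ hb₁ hg₀ (by positivity) (by positivity)
    ((rpow_mul_partitionDegree_rpow_le hd hs₀ hε.le hb₀ hb₁.le hg).trans hs)

end PartitionContracts

variable {d s : ℕ} {Φ : ℝ → ℝ → ℝ} {β m₁ α : ℝ}

lemma sum_incidences_cell_le (hα : 0 ≤ α)
    (hΦ : PartitionContracts (2 ^ (d * s)) (partitionDegree d s + 1) (1 / 4) Φ)
    {P : Finset (Fin d → ℝ)} {L : Finset (Set (Fin d → ℝ))} (hL : ∀ l ∈ L, IsLine l)
    {gs : List (MvPolynomial (Fin d) ℝ)} (hdeg : gs.prod.totalDegree ≤ partitionDegree d s)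
    (hcell : ∀ τ ∈ openCells P gs, 2 ^ (d * s) * #(cell P gs τ) ≤ #P)
    (hrec : ∀ τ ∈ openCells P gs, ∀ L' ⊆ L, (Incidences (cell P gs τ) L' : ℝ)
      ≤ α * (Φ #(cell P gs τ) #L' + #(cell P gs τ) + #L')) :
    ∑ τ ∈ openCells P gs, (Incidences (cell P gs τ) (meeting L (cell P gs τ)) : ℝ)
      ≤ α * (1 / 4 * Φ #P #L + (#P - #{p ∈ P | gs.prod.eval p = 0})
        + (partitionDegree d s + 1) * #L) := by
  have hpoints : ∑ τ ∈ openCells P gs, (#(cell P gs τ) : ℝ)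
      = #P - #{p ∈ P | gs.prod.eval p = 0} :=
    eq_sub_of_add_eq (by exact_mod_cast sum_card_cell_add_card_zeroSet (P := P) (gs := gs))
  have hlines : ∑ τ ∈ openCells P gs, (#(meeting L (cell P gs τ)) : ℝ)
      ≤ (partitionDegree d s + 1) * #L := by
    exact_mod_cast (sum_card_meeting_cell_le hL gs).trans
      (Nat.mul_le_mul_right _ (Nat.add_le_add_right hdeg 1))
  have hcontract := hΦ (openCells P gs) (fun τ => #(cell P gs τ))
    (fun τ => #(meeting L (cell P gs τ))) (Nat.cast_nonneg #P) (Nat.cast_nonneg #L)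
    (fun τ hτ => ⟨Nat.cast_nonneg _, Nat.cast_nonneg _, by exact_mod_cast hcell τ hτ⟩)
    (hpoints.trans_le (sub_le_self _ (Nat.cast_nonneg _))) hlines
  calc ∑ τ ∈ openCells P gs, (Incidences (cell P gs τ) (meeting L (cell P gs τ)) : ℝ)
      ≤ ∑ τ ∈ openCells P gs, α * (Φ #(cell P gs τ) #(meeting L (cell P gs τ))
          + #(cell P gs τ) + #(meeting L (cell P gs τ))) :=
        sum_le_sum fun τ hτ => hrec τ hτ _ (filter_subset _ _)
    _ ≤ _ := by
        rw [← mul_sum, sum_add_distrib, sum_add_distrib, hpoints]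
        gcongr

lemma incidences_le_add_of_partition (hs : 0 < d * s) (hβ : 0 ≤ β)
    (hα : 4 * β + partitionDegree d s ≤ α)
    (hΦ : PartitionContracts (2 ^ (d * s)) (partitionDegree d s + 1) (1 / 4) Φ)
    {P : Finset (Fin d → ℝ)} {L : Finset (Set (Fin d → ℝ))} (hL : ∀ l ∈ L, IsLine l)
    (hΦ₀ : 0 ≤ Φ #P #L) (habsorb : 2 * (partitionDegree d s + 3) * #L ≤ Φ #P #L)
    (hsurface : ∀ f : MvPolynomial (Fin d) ℝ, f ≠ 0 → f.totalDegree ≤ partitionDegree d s →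
      (Incidences {p ∈ P | f.eval p = 0} {l ∈ L | l ⊆ zeroSet f} : ℝ)
        ≤ β * (Φ #P #L + #{p ∈ P | f.eval p = 0} + #L))
    (hrec : ∀ P' : Finset (Fin d → ℝ), #P' < #P → ∀ L' ⊆ L,
      (Incidences P' L' : ℝ) ≤ α * (Φ #P' #L' + #P' + #L')) :
    (Incidences P L : ℝ) ≤ α * (Φ #P #L + #P + #L) := by
  obtain ⟨gs, hgs₀, hdeg, hcell⟩ := exists_partition s P
  have hlt : ∀ τ ∈ openCells P gs, #(cell P gs τ) < #P := fun τ hτ =>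
    (lt_mul_of_one_lt_left (cell_nonempty hτ).card_pos (Nat.one_lt_two_pow hs.ne')).trans_le
      (hcell τ hτ)
  have hα₀ : 0 ≤ α := le_trans (by positivity) hα
  have hcells := sum_incidences_cell_le hα₀ hΦ hL hdeg hcell fun τ hτ => hrec _ (hlt τ hτ)
  have hsurf := hsurface gs.prod hgs₀ hdeg
  have hcrossing : (gs.prod.totalDegree * #L : ℝ) ≤ partitionDegree d s * #L := by gcongr
  have htotal : (Incidences P L : ℝ) ≤ ∑ τ ∈ openCells P gs,
        (Incidences (cell P gs τ) (meeting L (cell P gs τ)) : ℝ)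
      + Incidences {p ∈ P | gs.prod.eval p = 0} {l ∈ L | l ⊆ zeroSet gs.prod}
      + gs.prod.totalDegree * #L := by
    exact_mod_cast incidences_le_sum_openCells_add hL gs
  set m₀ : ℝ := (#{p ∈ P | gs.prod.eval p = 0} : ℝ)
  set D : ℝ := (partitionDegree d s : ℝ)
  have hD₀ : 0 ≤ D := Nat.cast_nonneg _
  have hsplit : β * (Φ #P #L + m₀ + #L) ≤ α / 4 * Φ #P #L + α * m₀ + α * #L := by
    rw [mul_add, mul_add]
    gcongr <;> linarith
  calc (Incidences P L : ℝ)
      ≤ α * (1 / 4 * Φ #P #L + (#P - m₀) + (D + 1) * #L) + β * (Φ #P #L + m₀ + #L) + D * #L := by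
        linarith
    _ ≤ α * (1 / 4 * Φ #P #L + (#P - m₀) + (D + 1) * #L) + (α / 4 * Φ #P #L + α * m₀ + α * #L)
          + α * #L := by
        gcongr
        linarith
    _ = α * (1 / 2 * (Φ #P #L + 2 * (D + 3) * #L) + #P) := by ring
    _ ≤ α * (Φ #P #L + #P + #L) := mul_le_mul_of_nonneg_left
        (by linarith [(Nat.cast_nonneg #L : (0 : ℝ) ≤ #L)]) hα₀

lemma incidences_le_mul_card_of_lt (hm₁ : 0 ≤ m₁)
    {P : Finset (Fin d → ℝ)} {L : Finset (Set (Fin d → ℝ))} (hL : ∀ l ∈ L, IsLine l)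
    (hlt : (#P : ℝ) < m₁ ∨ (#P : ℝ) ^ 2 < #L) : (Incidences P L : ℝ) ≤ (m₁ + 2) * #L := by
  have hn : (0 : ℝ) ≤ #L := Nat.cast_nonneg _
  rcases hlt with hsmall | hmany
  · have hmul : (Incidences P L : ℝ) ≤ #P * #L := by exact_mod_cast incidences_le_mul
    exact hmul.trans (mul_le_mul_of_nonneg_right (by linarith) hn)
  · have hsq : (Incidences P L : ℝ) ≤ (#P : ℝ) ^ 2 + #L := by
      exact_mod_cast incidences_le_sq_add (pairwise_subsingleton_inter_of_isLine hL)
    linarith [mul_nonneg hm₁ hn]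

/-- Divide and conquer. In each step the lines are counted more often, but by `habsorb` their number
is dominated by `Φ` as long as there are many points and not too many lines. -/
lemma incidences_le_of_partitionContracts (hs : 0 < d * s)
    {L : Finset (Set (Fin d → ℝ))} (hL : ∀ l ∈ L, IsLine l) (hβ : 0 ≤ β) (hm₁ : 0 ≤ m₁)
    (hΦ₀ : ∀ m n, 0 ≤ m → 0 ≤ n → 0 ≤ Φ m n)
    (hΦ : PartitionContracts (2 ^ (d * s)) (partitionDegree d s + 1) (1 / 4) Φ)
    (habsorb : ∀ m n, m₁ ≤ m → 0 ≤ n → n ≤ m ^ 2 → 2 * (partitionDegree d s + 3) * n ≤ Φ m n)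
    (hsurface : ∀ P, ∀ L' ⊆ L, ∀ f : MvPolynomial (Fin d) ℝ, f ≠ 0 →
      f.totalDegree ≤ partitionDegree d s →
      (Incidences {p ∈ P | f.eval p = 0} {l ∈ L' | l ⊆ zeroSet f} : ℝ)
        ≤ β * (Φ #P #L' + #{p ∈ P | f.eval p = 0} + #L')) (P : Finset (Fin d → ℝ)) :
    ∀ L' ⊆ L, (Incidences P L' : ℝ)
      ≤ (4 * β + partitionDegree d s + (m₁ + 2)) * (Φ #P #L' + #P + #L') := by
  induction hk : #P using Nat.strong_induction_on generalizing P with | _ k ih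
  subst hk
  intro L' hL'
  have hlines : ∀ l ∈ L', IsLine l := fun l hl => hL l (hL' hl)
  have hΦ₀' : 0 ≤ Φ #P #L' := hΦ₀ _ _ (Nat.cast_nonneg _) (Nat.cast_nonneg _)
  by_cases hlt : (#P : ℝ) < m₁ ∨ (#P : ℝ) ^ 2 < #L'
  · refine (incidences_le_mul_card_of_lt hm₁ hlines hlt).trans ?_
    exact mul_le_mul (le_add_of_nonneg_left (by positivity))
      (le_add_of_nonneg_left (by positivity)) (Nat.cast_nonneg _) (by positivity)
  · rw [not_or, not_lt, not_lt] at hlt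
    exact incidences_le_add_of_partition hs hβ (le_add_of_nonneg_right (by positivity)) hΦ hlines
      hΦ₀' (habsorb _ _ hlt.1 (Nat.cast_nonneg _) hlt.2) (hsurface P L' hL')
      fun P' hP' L'' hL'' => ih _ hP' P' rfl L'' (hL''.trans hL')

lemma exists_forall_mul_le_rpow_mul_rpow {ε : ℝ} (hε : 0 < ε) {B : ℝ} (hB : 0 ≤ B) :
    ∃ m₁ : ℝ, 0 < m₁ ∧ ∀ b m n : ℝ, 0 < b → b ≤ 1 → m₁ ≤ m → 0 ≤ n → n ≤ m ^ 2 →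
      B * n ≤ m ^ (2 * (1 - b) + ε) * n ^ b := by
  refine ⟨(B + 1) ^ ε⁻¹, by positivity, fun b m n hb₀ hb₁ hm hn hnm => ?_⟩
  have hm₀ : 0 < m := lt_of_lt_of_le (by positivity) hm
  have hB' : B ≤ m ^ ε := by
    calc B ≤ ((B + 1) ^ ε⁻¹) ^ ε := by
          rw [Real.rpow_inv_rpow (by positivity) hε.ne']
          linarith
      _ ≤ m ^ ε := by gcongr
  have hn' : n ^ (1 - b) ≤ m ^ (2 * (1 - b)) := by
    rw [Real.rpow_mul hm₀.le, Real.rpow_two]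
    exact Real.rpow_le_rpow hn hnm (sub_nonneg.2 hb₁)
  calc B * n = B * (n ^ (1 - b) * n ^ b) := by
        rw [← Real.rpow_add_of_nonneg hn (sub_nonneg.2 hb₁) hb₀.le, sub_add_cancel, Real.rpow_one]
    _ ≤ m ^ ε * (m ^ (2 * (1 - b)) * n ^ b) := by gcongr
    _ = m ^ (2 * (1 - b) + ε) * n ^ b := by
        rw [Real.rpow_add hm₀]
        ring

end Recursion

section Projection

open Finset

variable {d : ℕ}

lemma IsLine.image {e : ℕ} {l : Set (Fin d → ℝ)} (hl : IsLine l)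
    {A : (Fin d → ℝ) →ₗ[ℝ] (Fin e → ℝ)} (hA : Set.InjOn A l) : IsLine (A '' l) := by
  obtain ⟨a, b, hb, rfl⟩ := hl
  refine ⟨A a, A b, fun h => hb ?_, ?_⟩
  · have hab : a + b = a := hA ⟨1, by rw [one_smul]⟩ ⟨0, by rw [zero_smul, add_zero]⟩
      (by rw [map_add, h, add_zero])
    exact left_eq_add.1 hab.symm
  · ext y
    constructor
    · rintro ⟨_, ⟨t, rfl⟩, rfl⟩
      exact ⟨t, by rw [map_add, map_smul]⟩
    · rintro ⟨t, rfl⟩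
      exact ⟨a + t • b, ⟨t, rfl⟩, by rw [map_add, map_smul]⟩

lemma exists_dual_forall_mem_ne_zero {V : Type*} [AddCommGroup V] [Module ℝ V] {S : Set V}
    (hS : S.Finite) (h0 : ∀ v ∈ S, v ≠ 0) : ∃ u : Module.Dual ℝ V, ∀ v ∈ S, u v ≠ 0 := by
  have := hS.to_subtype
  obtain ⟨u, hu⟩ := Module.exists_dual_forall_apply_ne_zero (K := ℝ) (fun v : S => v.1)
    fun v => h0 v v.2
  exact ⟨u, fun v hv => hu ⟨v, hv⟩⟩

lemma bijOn_univ_of_apply_ne_zero {u : Module.Dual ℝ (Fin d → ℝ)} {a b : Fin d → ℝ}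
    (hub : u b ≠ 0) : Set.BijOn u {x | ∃ t : ℝ, x = a + t • b} Set.univ := by
  refine ⟨Set.mapsTo_univ _ _, ?_, fun y _ => ⟨a + ((y - u a) / u b) • b, ⟨_, rfl⟩, ?_⟩⟩
  · rintro _ ⟨s, rfl⟩ _ ⟨t, rfl⟩ h
    rw [map_add, map_add, map_smul, map_smul, smul_eq_mul, smul_eq_mul] at h
    rw [mul_right_cancel₀ hub (add_left_cancel h)]
  · rw [map_add, map_smul, smul_eq_mul, div_mul_cancel₀ _ hub, add_sub_cancel]

lemma exists_dual_injOn_bijOn {Q : Set (Fin d → ℝ)} (hQ : Q.Finite)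
    {L : Finset (Set (Fin d → ℝ))} (hL : ∀ l ∈ L, IsLine l) :
    ∃ u : Module.Dual ℝ (Fin d → ℝ), Set.InjOn u Q ∧ ∀ l ∈ L, Set.BijOn u l Set.univ := by
  choose! a b hb hl using hL
  have hfinite : (b '' L ∪ (fun q => q.1 - q.2) '' Q.offDiag).Finite :=
    (L.finite_toSet.image b).union (hQ.offDiag.image _)
  obtain ⟨u, hu⟩ := exists_dual_forall_mem_ne_zero hfinite <| by
    rintro _ (⟨l, hlL, rfl⟩ | ⟨q, hq, rfl⟩)
    exacts [hb l hlL, sub_ne_zero.2 hq.2.2]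
  refine ⟨u, fun x hx y hy hxy => ?_, fun l hlL => ?_⟩
  · by_contra hne
    refine hu (x - y) (Or.inr ⟨(x, y), ⟨hx, hy, hne⟩, rfl⟩) ?_
    rw [map_sub, hxy, sub_self]
  · rw [hl l hlL]
    exact bijOn_univ_of_apply_ne_zero (hu _ (Or.inl ⟨l, hlL, rfl⟩))

lemma isLine_setOf_dual_eq {u : Module.Dual ℝ (Fin 2 → ℝ)} (hu : u ≠ 0) (z : Fin 2 → ℝ) :
    IsLine {x | u x = u z} := by
  have happly : ∀ x, u x = x 0 * u ![1, 0] + x 1 * u ![0, 1] := fun x => by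
    rw [← smul_eq_mul, ← smul_eq_mul, ← map_smul, ← map_smul, ← map_add]
    congr 1
    ext i
    fin_cases i <;> simp
  set α := u ![1, 0]
  set β := u ![0, 1]
  have hnorm : α ^ 2 + β ^ 2 ≠ 0 := fun h => hu <| LinearMap.ext fun x => by
    have hα : α = 0 := by nlinarith
    have hβ : β = 0 := by nlinarith
    rw [happly, hα, hβ, mul_zero, mul_zero, add_zero, LinearMap.zero_apply]
  refine ⟨z, ![-β, α], fun h => hnorm ?_, ?_⟩
  · have hβ : -β = 0 := congrFun h 0
    have hα : α = 0 := congrFun h 1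
    rw [neg_eq_zero.1 hβ, hα]
    norm_num
  · ext x
    simp only [Set.mem_ofPred_eq, happly]
    constructor
    · intro h
      refine ⟨((x 1 - z 1) * α - (x 0 - z 0) * β) / (α ^ 2 + β ^ 2),
        funext (Fin.forall_fin_two.2 ⟨?_, ?_⟩)⟩
      · change x 0 = z 0 + (_ / (α ^ 2 + β ^ 2)) * -β
        field_simp
        linear_combination α * h
      · change x 1 = z 1 + (_ / (α ^ 2 + β ^ 2)) * α
        field_simp
        linear_combination β * h
    · rintro ⟨t, rfl⟩
      change (z 0 + t * -β) * α + (z 1 + t * α) * β = z 0 * α + z 1 * β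
      ring

/-- A generic line meets the given lines in distinct points. -/
lemma card_le_totalDegree_of_isLine {L : Finset (Set (Fin 2 → ℝ))} (hL : ∀ l ∈ L, IsLine l)
    {f : MvPolynomial (Fin 2) ℝ} (hf : f ≠ 0) (hLf : ∀ l ∈ L, l ⊆ zeroSet f) :
    #L ≤ f.totalDegree := by
  obtain ⟨z, hz⟩ : ∃ z, f.eval z ≠ 0 := by
    by_contra! h
    exact hf (MvPolynomial.funext fun z => by rw [h z, map_zero])
  have hfinite : (⋃ e ∈ (L : Set (Set (Fin 2 → ℝ))).offDiag, e.1 ∩ e.2).Finite :=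
    L.finite_toSet.offDiag.biUnion fun e he =>
      ((hL _ he.1).subsingleton_inter (hL _ he.2.1) he.2.2).finite
  obtain ⟨u, huQ, huL⟩ := exists_dual_injOn_bijOn (hfinite.insert z) hL
  rcases L.eq_empty_or_nonempty with rfl | ⟨l₀, hl₀⟩
  · exact Nat.zero_le _
  have hu : u ≠ 0 := by
    rintro rfl
    obtain ⟨x, -, hx⟩ := (huL l₀ hl₀).surjOn (Set.mem_univ 1)
    exact zero_ne_one hx
  have hmeet : ∀ l ∈ L, ∃ x ∈ l, u x = u z := fun l hl => (huL l hl).surjOn (Set.mem_univ _)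
  choose! x hxl hxz using hmeet
  have hinj : Set.InjOn x L := fun l hl l' hl' hll' => by
    by_contra hne
    have hmem : x l ∈ ⋃ e ∈ (L : Set (Set (Fin 2 → ℝ))).offDiag, e.1 ∩ e.2 :=
      Set.mem_biUnion (x := (l, l')) ⟨hl, hl', hne⟩ ⟨hxl l hl, hll' ▸ hxl l' hl'⟩
    have hxz' : x l = z :=
      huQ (Set.mem_insert_of_mem _ hmem) (Set.mem_insert _ _) (hxz l hl)
    exact hz (hxz' ▸ hLf l hl (hxl l hl))
  rw [← card_image_of_injOn hinj]
  refine (isLine_setOf_dual_eq hu z).card_le_totalDegree (fun h => hz (h rfl)) ?_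
  rw [coe_image]
  rintro _ ⟨l, hl, rfl⟩
  exact ⟨hxz l hl, hLf l hl (hxl l hl)⟩

lemma incidences_le_incidences_image {e : ℕ} {A : (Fin d → ℝ) → (Fin e → ℝ)}
    {P : Finset (Fin d → ℝ)} {C : Finset (Set (Fin d → ℝ))} (hP : Set.InjOn A P)
    (hC : Set.InjOn (A '' ·) (C : Set (Set (Fin d → ℝ)))) :
    Incidences P C ≤ Incidences (P.image A) (C.image (A '' ·)) := by
  refine card_le_card_of_injOn (Prod.map A (A '' ·)) (fun z hz => ?_) fun z hz z' hz' h => ?_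
  · simp only [coe_filter, mem_product, Set.mem_ofPred_eq] at hz ⊢
    exact ⟨⟨mem_image_of_mem _ hz.1.1, mem_image_of_mem _ hz.1.2⟩, Set.mem_image_of_mem A hz.2⟩
  · simp only [coe_filter, mem_product, Set.mem_ofPred_eq] at hz hz'
    exact Prod.ext (hP hz.1.1 hz'.1.1 (congrArg Prod.fst h))
      (hC hz.1.2 hz'.1.2 (congrArg Prod.snd h))

/-- A generic projection to the plane. For distinct lines `l`, `l'` a point of `l ∖ l'` and the
point of `l'` with the same first coordinate `u` are separated by the second coordinate `w`. -/
lemma exists_injOn_isLine_image (P : Finset (Fin d → ℝ)) {L : Finset (Set (Fin d → ℝ))}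
    (hL : ∀ l ∈ L, IsLine l) :
    ∃ A : (Fin d → ℝ) →ₗ[ℝ] (Fin 2 → ℝ), Set.InjOn A P ∧
      Set.InjOn (A '' ·) (L : Set (Set (Fin d → ℝ))) ∧ ∀ l ∈ L, IsLine (A '' l) := by
  obtain ⟨u, huP, huL⟩ := exists_dual_injOn_bijOn P.finite_toSet hL
  have hpoints : ∀ e ∈ (L : Set (Set (Fin d → ℝ))).offDiag,
      ∃ p ∈ e.1, ∃ q ∈ e.2, u q = u p ∧ p ≠ q := by
    rintro ⟨l, l'⟩ ⟨hl, hl', hne⟩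
    obtain ⟨p, hp, hp'⟩ := (hL l hl).exists_mem_notMem (hL l' hl') hne
    obtain ⟨q, hq, hqp⟩ := (huL l' hl').surjOn (Set.mem_univ (u p))
    exact ⟨p, hp, q, hq, hqp, fun h => hp' (h ▸ hq)⟩
  choose! p hp q hq huq hpq using hpoints
  obtain ⟨w, hw⟩ := exists_dual_forall_mem_ne_zero (S := (fun e => p e - q e) ''
    (L : Set (Set (Fin d → ℝ))).offDiag) (L.finite_toSet.offDiag.image _) <| by
      rintro _ ⟨e, he, rfl⟩
      exact sub_ne_zero.2 (hpq e he)
  have hfst : ∀ {x y}, LinearMap.pi ![u, w] x = LinearMap.pi ![u, w] y → u x = u y :=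
    fun h => congrFun h 0
  have hsnd : ∀ {x y}, LinearMap.pi ![u, w] x = LinearMap.pi ![u, w] y → w x = w y :=
    fun h => congrFun h 1
  refine ⟨LinearMap.pi ![u, w], fun x hx y hy h => huP hx hy (hfst h), fun l hl l' hl' h => ?_,
    fun l hl => (hL l hl).image fun x hx y hy h => (huL l hl).injOn hx hy (hfst h)⟩
  by_contra hne
  have he : (l, l') ∈ (L : Set (Set (Fin d → ℝ))).offDiag := ⟨hl, hl', hne⟩
  obtain ⟨y, hy, hyp⟩ : LinearMap.pi ![u, w] (p (l, l')) ∈ LinearMap.pi ![u, w] '' l' :=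
    h.subset (Set.mem_image_of_mem _ (hp _ he))
  have hyq : y = q (l, l') :=
    (huL l' hl').injOn hy (hq _ he) ((hfst hyp).trans (huq _ he).symm)
  refine hw _ ⟨_, he, rfl⟩ ?_
  rw [map_sub, sub_eq_zero, ← hyq, hsnd hyp]

end Projection

section SzemerediTrotter

open Finset

lemma exists_incidences_plane_le {ε : ℝ} (hε : 0 < ε) :
    ∃ β : ℝ, 0 < β ∧ ∀ (P : Finset (Fin 2 → ℝ)) (L : Finset (Set (Fin 2 → ℝ))),
      (∀ l ∈ L, IsLine l) →
      (Incidences P L : ℝ) ≤ β * ((#P : ℝ) ^ (2 / 3 + ε) * (#L : ℝ) ^ (2 / 3 : ℝ) + #P + #L) := by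
  obtain ⟨s, hs, hcontract⟩ := exists_partitionContracts two_pos hε
  obtain ⟨m₁, hm₁, habsorb⟩ := exists_forall_mul_le_rpow_mul_rpow hε
    (B := 2 * (partitionDegree 2 s + 3)) (by positivity)
  have hΦ := hcontract (2 / 3) (1 / 3 + ε) (by norm_num) (by norm_num) (by norm_num)
  rw [show (1 : ℝ) - 2 / 3 + (1 / 3 + ε) = 2 / 3 + ε by ring] at hΦ
  refine ⟨4 * partitionDegree 2 s + partitionDegree 2 s + (m₁ + 2), by positivity,
    fun P L hL => incidences_le_of_partitionContracts (by positivity) hL (Nat.cast_nonneg _) hm₁.le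
      (fun m n hm hn => by positivity) hΦ (fun m n hm hn hnm => ?_)
      (fun P' L' hL' f hf hdeg => ?_) P L Subset.rfl⟩
  · convert habsorb (2 / 3) m n (by norm_num) (by norm_num) hm hn hnm using 3
    norm_num
  · have hcard : #{l ∈ L' | l ⊆ zeroSet f} ≤ partitionDegree 2 s :=
      (card_le_totalDegree_of_isLine (fun l hl => hL l (hL' (mem_of_mem_filter l hl))) hf
        fun l hl => (mem_filter.1 hl).2).trans hdeg
    calc (Incidences {p ∈ P' | f.eval p = 0} {l ∈ L' | l ⊆ zeroSet f} : ℝ)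
        ≤ #{p ∈ P' | f.eval p = 0} * partitionDegree 2 s := by
          exact_mod_cast incidences_le_mul.trans (Nat.mul_le_mul_left _ hcard)
      _ = partitionDegree 2 s * #{p ∈ P' | f.eval p = 0} := mul_comm _ _
      _ ≤ partitionDegree 2 s * ((#P' : ℝ) ^ (2 / 3 + ε) * (#L' : ℝ) ^ (2 / 3 : ℝ)
            + #{p ∈ P' | f.eval p = 0} + #L') := by
          gcongr
          rw [add_right_comm]
          exact le_add_of_nonneg_left (by positivity)

lemma exists_incidences_le {ε : ℝ} (hε : 0 < ε) :
    ∃ β : ℝ, 0 < β ∧ ∀ {d : ℕ} (P : Finset (Fin d → ℝ)) (L : Finset (Set (Fin d → ℝ))),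
      (∀ l ∈ L, IsLine l) →
      (Incidences P L : ℝ) ≤ β * ((#P : ℝ) ^ (2 / 3 + ε) * (#L : ℝ) ^ (2 / 3 : ℝ) + #P + #L) := by
  obtain ⟨β, hβ, hplane⟩ := exists_incidences_plane_le hε
  refine ⟨β, hβ, fun P L hL => ?_⟩
  obtain ⟨A, hAP, hAL, hline⟩ := exists_injOn_isLine_image P hL
  rw [← card_image_of_injOn hAP, ← card_image_of_injOn hAL]
  exact (Nat.cast_le.2 (incidences_le_incidences_image hAP hAL)).trans
    (hplane _ _ (forall_mem_image.2 hline))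

end SzemerediTrotter

section Space

open Finset

/-- The main terms of the incidence bound for `m` points and `n` lines in `ℝ^d`, at most `q` of
which lie on a common hypersurface of low degree. For `d = 3` they are
`m ^ (1 / 2 + ε) * n ^ (3 / 4) + m ^ (2 / 3 + ε) * n ^ (1 / 2) * q ^ (1 / 6)`. The exponents of
`n` and `q` in the second term sum to `2 / 3`, and that of `n` is the smallest one for which the
term does not grow under partitioning. -/
def incidenceBound (d : ℕ) (ε q m n : ℝ) : ℝ :=
  m ^ (2 / (d + 1 : ℝ) + ε) * n ^ (d / (d + 1) : ℝ)
    + m ^ (2 / 3 + ε) * n ^ (d / (3 * (d - 1)) : ℝ) * q ^ ((d - 2) / (3 * (d - 1)) : ℝ)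

variable {d : ℕ} {ε : ℝ}

lemma exists_partitionContracts_incidenceBound (hd : 2 ≤ d) (hε : 0 < ε) :
    ∃ s : ℕ, 0 < s ∧ ∀ q : ℝ, 0 ≤ q →
      PartitionContracts (2 ^ (d * s)) (partitionDegree d s + 1) (1 / 4)
        (incidenceBound d ε q) := by
  have hd' : (2 : ℝ) ≤ d := by exact_mod_cast hd
  have hpred : (0 : ℝ) < d - 1 := by linarith
  obtain ⟨s, hs, hcontract⟩ := exists_partitionContracts (by omega : 0 < d) hε
  have hfst := hcontract (d / (d + 1)) (1 / (d + 1) + ε) (by positivity)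
    ((div_lt_one (by positivity)).2 (lt_add_one _)) (by field_simp; rfl)
  have hsnd := hcontract (d / (3 * (d - 1))) (1 / (3 * (d - 1)) + ε) (by positivity)
    ((div_lt_one (by positivity)).2 (by linarith)) (by field_simp; rfl)
  rw [show (1 : ℝ) - d / (d + 1) + (1 / (d + 1) + ε) = 2 / (d + 1) + ε by field_simp; ring] at hfst
  rw [show (1 : ℝ) - d / (3 * (d - 1)) + (1 / (3 * (d - 1)) + ε) = 2 / 3 + ε by
    field_simp; ring] at hsnd
  exact ⟨s, hs, fun q hq => hfst.add (hsnd.mul_const (by positivity))⟩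

lemma exists_forall_mul_le_incidenceBound (hd : 0 < d) (hε : 0 < ε) {B : ℝ} (hB : 0 ≤ B) :
    ∃ m₁ : ℝ, 0 < m₁ ∧ ∀ q m n : ℝ, 0 ≤ q → m₁ ≤ m → 0 ≤ n → n ≤ m ^ 2 →
      B * n ≤ incidenceBound d ε q m n := by
  obtain ⟨m₁, hm₁, habsorb⟩ := exists_forall_mul_le_rpow_mul_rpow hε hB
  refine ⟨m₁, hm₁, fun q m n hq hm hn hnm => ?_⟩
  have hfst := habsorb (d / (d + 1)) m n (by positivity)
    ((div_le_one (by positivity)).2 (by linarith)) hm hn hnm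
  rw [show 2 * (1 - (d : ℝ) / (d + 1)) = 2 / (d + 1) by field_simp; ring] at hfst
  have hm₀ : 0 ≤ m := hm₁.le.trans hm
  exact le_add_of_le_of_nonneg hfst (by positivity)

lemma rpow_add_le_rpow_mul_rpow {x y z a b : ℝ} (hx : 0 ≤ x) (hy : x ≤ y) (hz : x ≤ z)
    (ha : 0 ≤ a) (hb : 0 ≤ b) : x ^ (a + b) ≤ y ^ a * z ^ b := by
  rw [Real.rpow_add_of_nonneg hx ha hb]
  have hy₀ := hx.trans hy
  gcongr

lemma rpow_mul_rpow_le_incidenceBound (hd : 2 ≤ d) (hε : 0 ≤ ε) {m₀ m k n q : ℝ}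
    (hm₀ : 0 ≤ m₀) (hm : m₀ ≤ m) (hk : 0 ≤ k) (hn : k ≤ n) (hq : k ≤ q) :
    m₀ ^ (2 / 3 + ε) * k ^ (2 / 3 : ℝ) ≤ incidenceBound d ε q m n := by
  have hd' : (2 : ℝ) ≤ d := by exact_mod_cast hd
  have hpred : (0 : ℝ) < d - 1 := by linarith
  have hsplit := rpow_add_le_rpow_mul_rpow (a := d / (3 * (d - 1))) (b := (d - 2) / (3 * (d - 1)))
    hk hn hq (by positivity) (div_nonneg (sub_nonneg.2 hd') (by positivity))
  rw [show (d : ℝ) / (3 * (d - 1)) + (d - 2) / (3 * (d - 1)) = 2 / 3 by field_simp; ring] at hsplit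
  have hm' := hm₀.trans hm
  have hn' := hk.trans hn
  refine le_add_of_nonneg_of_le (by positivity) ?_
  rw [mul_assoc]
  gcongr

theorem lines_in_R3_general (d : ℕ) (hd : 2 ≤ d) (ε : ℝ) (hε : 0 < ε) :
    ∃ c : ℕ, ∃ α : ℝ, 0 < α ∧
      ∀ (P : Finset (Fin d → ℝ)) (L : Finset (Set (Fin d → ℝ))) (q : ℕ),
        (∀ l ∈ L, IsLine l) →
        (∀ f : MvPolynomial (Fin d) ℝ, f ≠ 0 → f.totalDegree ≤ c →
          #{l ∈ L | l ⊆ zeroSet f} ≤ q) →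
        (Incidences P L : ℝ) ≤ α *
          ((#P : ℝ) ^ ((2 : ℝ) / (d + 1) + ε) * (#L : ℝ) ^ ((d : ℝ) / (d + 1))
            + (#P : ℝ) ^ ((2 : ℝ) / 3 + ε) * (#L : ℝ) ^ ((d : ℝ) / (3 * (d - 1)))
              * (q : ℝ) ^ (((d : ℝ) - 2) / (3 * (d - 1)))
            + #P + #L) := by
  obtain ⟨s, hs, hcontract⟩ := exists_partitionContracts_incidenceBound hd hε
  obtain ⟨β, hβ, hsurface⟩ := exists_incidences_le hε
  obtain ⟨m₁, hm₁, habsorb⟩ := exists_forall_mul_le_incidenceBound (by omega : 0 < d) hε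
    (B := 2 * (partitionDegree d s + 3)) (by positivity)
  refine ⟨partitionDegree d s, 4 * β + partitionDegree d s + (m₁ + 2), by positivity,
    fun P L q hL hq => incidences_le_of_partitionContracts (by positivity) hL hβ.le hm₁.le
      (fun m n hm hn => by unfold incidenceBound; positivity) (hcontract q q.cast_nonneg)
      (fun m n => habsorb q m n q.cast_nonneg)
      (fun P' L' hL' f hf hdeg => ?_) P L Subset.rfl⟩
  have hlines : #{l ∈ L' | l ⊆ zeroSet f} ≤ q :=
    (card_le_card (filter_subset_filter _ hL')).trans (hq f hf hdeg)
  have hmain := rpow_mul_rpow_le_incidenceBound (ε := ε) hd hε.le (Nat.cast_nonneg _)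
    (Nat.cast_le.2 (card_filter_le P' fun p => f.eval p = 0)) (Nat.cast_nonneg _)
    (Nat.cast_le.2 (card_filter_le L' fun l => l ⊆ zeroSet f)) (Nat.cast_le.2 hlines)
  refine (hsurface _ _ fun l hl => hL l (hL' (mem_of_mem_filter l hl))).trans ?_
  gcongr
  exact filter_subset _ _

end Space

/-- **Lines in `ℝ³` (the case `k = 2` of the main three-dimensional theorem).**
For each `ε > 0` there is a constant `c(ε)` such that the following holds, with a
constant `α` depending only on `ε`. If `P` is a set of `m` distinct points and `L`
a set of `n` distinct lines in `ℝ³` such that every algebraic surface of degree at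
most `c(ε)` contains at most `q₂` lines of `L`, then
`I(P,L) ≤ α (m^{1/2+ε} n^{3/4} + m^{2/3+ε} n^{1/2} q₂^{1/6} + m + n)`. -/
theorem lines_in_R3 (ε : ℝ) (hε : 0 < ε) :
    ∃ c : ℕ, ∃ α : ℝ, 0 < α ∧
      ∀ (P : Finset (Fin 3 → ℝ)) (L : Finset (Set (Fin 3 → ℝ))) (q₂ : ℕ),
        (∀ ℓ ∈ L, IsLine ℓ) →
        (∀ f : MvPolynomial (Fin 3) ℝ, f ≠ 0 → f.totalDegree ≤ c →
            (L.filter fun ℓ => ℓ ⊆ zeroSet f).card ≤ q₂) →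
        (Incidences P L : ℝ) ≤
          α * ((P.card : ℝ) ^ ((1 : ℝ) / 2 + ε) * (L.card : ℝ) ^ ((3 : ℝ) / 4)
                + (P.card : ℝ) ^ ((2 : ℝ) / 3 + ε) * (L.card : ℝ) ^ ((1 : ℝ) / 2)
                    * (q₂ : ℝ) ^ ((1 : ℝ) / 6)
                + (P.card : ℝ) + (L.card : ℝ)) := by
  have hgeneral := lines_in_R3_general 3 (by norm_num) ε hε
  norm_num at hgeneral ⊢
  exact hgeneral
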